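/- Let 𝒳 be a Polish space, d ∈ ℕ, r ∈ [1,∞), μ ∈ 𝒫_r(𝒳), ν ∈ 𝒫_r(ℝ^d), and let C : 𝒳 × 𝒫_r(ℝ^d) → ℝ ∪ {+∞} be barycentric (C(x,p) = C(x,q) whenever b(p) = b(q)), lower semicontinuous, and satisfy C(x,p) ≥ −K(1 + d_𝒳(x,x₀)^r + 𝒲_r(p,δ_{y₀})^r) for some constant K. Then inf_{P ∈ Λ(μ,ν)} ∫ C(x,p) P(dx,dp) = sup{ ν(ψ) + μ(R_Cψ) : ψ ∈ Φ_r(ℝ^d) concave } = sup{ μ(φ) + ν(ψ) : φ ∈ Φ_r(𝒳), ψ ∈ Φ_r(ℝ^d) concave, φ(x) + ψ(y) ≤ C(x,δ_y) for all (x,y) ∈ 𝒳 × ℝ^d } = sup{ μ(φ) + ν(ψ) : φ ∈ Φ_r(𝒳), ψ ∈ Φ_r(ℝ^d), Δ : ℝ^d → ℝ^d, φ(x) + ψ(z) + Δ(y)·(z − y) ≤ C(x,δ_y) for all (x,y,z) ∈ 𝒳 × ℝ^d × ℝ^d }. -/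

import Mathlib

open MeasureTheory Set Filter
open scoped ENNReal NNReal Topology RealInnerProductSpace

noncomputable section

namespace WOT

/-- The set of couplings of `μ` and `ν`. -/
def Couplings {X Y : Type*} [MeasurableSpace X] [MeasurableSpace Y]
    (μ : Measure X) (ν : Measure Y) : Set (Measure (X × Y)) :=
  {π | π.map Prod.fst = μ ∧ π.map Prod.snd = ν}

/-- `K` is a disintegration of `π` with respect to its first marginal `μ`. -/
def IsDisint {X Y : Type*} [MeasurableSpace X] [MeasurableSpace Y]
    (π : Measure (X × Y)) (μ : Measure X) (K : X → Measure Y) : Prop :=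
  Measurable K ∧ (∀ x, IsProbabilityMeasure (K x)) ∧
    ∀ s : Set (X × Y), MeasurableSet s → π s = ∫⁻ x, K x (Prod.mk x ⁻¹' s) ∂μ

/-- The intensity `I(Q)` of a measure on measures. -/
def intensity {Y : Type*} [MeasurableSpace Y] (Q : Measure (Measure Y)) : Measure Y :=
  Q.join

/-- The intensity map `Î`. -/
def intensityHat {X Y : Type*} [MeasurableSpace X] [MeasurableSpace Y]
    (P : Measure (X × Measure Y)) : Measure (X × Y) :=
  P.bind fun xp => (Measure.dirac xp.1).prod xp.2

/-- `Λ(μ,ν)`, the set of probability measures on `X × 𝒫(Y)` whose intensity is a coupling. -/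
def Lambda {X Y : Type*} [MeasurableSpace X] [MeasurableSpace Y]
    (μ : Measure X) (ν : Measure Y) : Set (Measure (X × Measure Y)) :=
  {P | IsProbabilityMeasure P ∧ (∀ᵐ xp ∂P, IsProbabilityMeasure xp.2) ∧
    intensityHat P ∈ Couplings μ ν}

/-- Finite `r`-th moment. -/
def FinMom {X : Type*} [MeasurableSpace X] [PseudoMetricSpace X]
    (r : ℝ) (x₀ : X) (μ : Measure X) : Prop :=
  ∫⁻ x, ENNReal.ofReal (dist x x₀ ^ r) ∂μ < ⊤

/-- The growth class `Φ_r`. -/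
def PhiR {X : Type*} [PseudoMetricSpace X] (r : ℝ) (x₀ : X) : Set (X → ℝ) :=
  {φ | Continuous φ ∧ ∃ K : ℝ, ∀ x, |φ x| ≤ K * (1 + dist x x₀ ^ r)}

/-- The `r`-Wasserstein distance (valued in `ℝ≥0∞`). -/
def Wr {Y : Type*} [MeasurableSpace Y] [PseudoMetricSpace Y]
    (r : ℝ) (p q : Measure Y) : ℝ≥0∞ :=
  ⨅ π ∈ Couplings p q, (∫⁻ z : Y × Y, ENNReal.ofReal (dist z.1 z.2 ^ r) ∂π) ^ (1 / r)

/-- `𝒫_r(Y)`: probability measures with finite `r`-th moment. -/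
def Pr {Y : Type*} [MeasurableSpace Y] [PseudoMetricSpace Y] (r : ℝ) (y₀ : Y) :
    Set (Measure Y) :=
  {p | IsProbabilityMeasure p ∧ FinMom r y₀ p}

/-- `𝒫_r(𝒫_r(Y))`: probability measures on `𝒫_r(Y)` with finite `r`-th moment w.r.t. `𝒲_r`. -/
def PrP {Y : Type*} [MeasurableSpace Y] [PseudoMetricSpace Y] (r : ℝ) (y₀ : Y) :
    Set (Measure (Measure Y)) :=
  {Q | IsProbabilityMeasure Q ∧ (∀ᵐ p ∂Q, p ∈ Pr r y₀) ∧
    ∫⁻ p, Wr r p (Measure.dirac y₀) ^ r ∂Q < ⊤}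

/-- The positive part of an extended real, valued in `ℝ≥0∞`. -/
def epos (e : EReal) : ℝ≥0∞ := if e = ⊤ then ⊤ else ENNReal.ofReal e.toReal

/-- Extended-real integral: positive part minus negative part (with value `⊥` when
both parts are infinite, i.e. when the integral is not well-defined). -/
def eInt {X : Type*} [MeasurableSpace X] (f : X → EReal) (μ : Measure X) : EReal :=
  ((∫⁻ x, epos (f x) ∂μ : ℝ≥0∞) : EReal) - ((∫⁻ x, epos (-(f x)) ∂μ : ℝ≥0∞) : EReal)

/-- Extended-real integral with the opposite (`⊤`) convention for ill-defined integrals. -/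
def eIntU {X : Type*} [MeasurableSpace X] (f : X → EReal) (μ : Measure X) : EReal :=
  -eInt (fun x => -(f x)) μ

/-- The extended-real integral is well-defined. -/
def eIntWellDef {X : Type*} [MeasurableSpace X] (f : X → EReal) (μ : Measure X) : Prop :=
  (∫⁻ x, epos (f x) ∂μ ≠ ⊤) ∨ (∫⁻ x, epos (-(f x)) ∂μ ≠ ⊤)

/-- Convergence in the `r`-Wasserstein distance. -/
def WrTendsto {Y : Type*} [MeasurableSpace Y] [PseudoMetricSpace Y]
    (r : ℝ) (ps : ℕ → Measure Y) (p : Measure Y) : Prop :=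
  Tendsto (fun n => Wr r (ps n) p) atTop (nhds 0)

/-- (Sequential) lower semicontinuity on `𝒫_r(Y)` w.r.t. `𝒲_r`. -/
def LscWr1 {Y : Type*} [MeasurableSpace Y] [PseudoMetricSpace Y]
    (r : ℝ) (y₀ : Y) (G : Measure Y → EReal) : Prop :=
  ∀ (p : Measure Y) (ps : ℕ → Measure Y), p ∈ Pr r y₀ → (∀ n, ps n ∈ Pr r y₀) →
    WrTendsto r ps p → G p ≤ liminf (fun n => G (ps n)) atTop

/-- (Sequential) upper semicontinuity on `𝒫_r(Y)` w.r.t. `𝒲_r`. -/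
def UscWr1 {Y : Type*} [MeasurableSpace Y] [PseudoMetricSpace Y]
    (r : ℝ) (y₀ : Y) (G : Measure Y → EReal) : Prop :=
  ∀ (p : Measure Y) (ps : ℕ → Measure Y), p ∈ Pr r y₀ → (∀ n, ps n ∈ Pr r y₀) →
    WrTendsto r ps p → limsup (fun n => G (ps n)) atTop ≤ G p

/-- (Sequential) lower semicontinuity on `X × 𝒫_r(Y)` w.r.t. `d_X × 𝒲_r`. -/
def LscWr {X Y : Type*} [TopologicalSpace X] [MeasurableSpace Y] [PseudoMetricSpace Y]
    (r : ℝ) (y₀ : Y) (C : X × Measure Y → EReal) : Prop :=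
  ∀ (x : X) (xs : ℕ → X) (p : Measure Y) (ps : ℕ → Measure Y),
    p ∈ Pr r y₀ → (∀ n, ps n ∈ Pr r y₀) → Tendsto xs atTop (nhds x) → WrTendsto r ps p →
    C (x, p) ≤ liminf (fun n => C (xs n, ps n)) atTop

/-- (Sequential) continuity of a real-valued cost on `X × 𝒫_r(Y)` w.r.t. `d_X × 𝒲_r`. -/
def ContWr {X Y : Type*} [TopologicalSpace X] [MeasurableSpace Y] [PseudoMetricSpace Y]
    (r : ℝ) (y₀ : Y) (C : X × Measure Y → ℝ) : Prop :=
  ∀ (x : X) (xs : ℕ → X) (p : Measure Y) (ps : ℕ → Measure Y),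
    p ∈ Pr r y₀ → (∀ n, ps n ∈ Pr r y₀) → Tendsto xs atTop (nhds x) → WrTendsto r ps p →
    Tendsto (fun n => C (xs n, ps n)) atTop (nhds (C (x, p)))

/-- Convexity of an extended-real-valued function on a set of measures. -/
def EConvexOn {Y : Type*} [MeasurableSpace Y] (S : Set (Measure Y)) (G : Measure Y → EReal) :
    Prop :=
  ∀ p ∈ S, ∀ q ∈ S, ∀ t : ℝ≥0, t ≤ 1 →
    G ((t : ℝ≥0∞) • p + ((1 - t : ℝ≥0) : ℝ≥0∞) • q)
      ≤ ((t : ℝ) : EReal) * G p + (((1 - t : ℝ≥0) : ℝ) : EReal) * G q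

/-- The lower semicontinuous convex envelope (on `𝒫_r(Y)` w.r.t. `𝒲_r`). -/
def cvxEnvWr {Y : Type*} [MeasurableSpace Y] [PseudoMetricSpace Y]
    (r : ℝ) (y₀ : Y) (f : Measure Y → EReal) : Measure Y → EReal :=
  fun p => ⨆ G ∈ {G : Measure Y → EReal |
    LscWr1 r y₀ G ∧ EConvexOn (Pr r y₀) G ∧ ∀ q ∈ Pr r y₀, G q ≤ f q}, G p

/-- The cost `C̃(x,p) = inf {∫ C(x,q) Q(dq) : Q ∈ 𝒫_r(𝒫_r(Y)), I(Q) = p}`. -/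
def tildeC {X Y : Type*} [MeasurableSpace X] [MeasurableSpace Y] [PseudoMetricSpace Y]
    (r : ℝ) (y₀ : Y) (C : X × Measure Y → EReal) : X × Measure Y → EReal :=
  fun xp => ⨅ Q ∈ {Q | Q ∈ PrP r y₀ ∧ intensity Q = xp.2}, eInt (fun q => C (xp.1, q)) Q

/-- The barycenter of a measure on a normed space. -/
def bary {E : Type*} [NormedAddCommGroup E] [NormedSpace ℝ E] [MeasurableSpace E]
    (p : Measure E) : E :=
  ∫ y, y ∂p

/-- Convex order of measures. -/
def ConvexOrder {E : Type*} [NormedAddCommGroup E] [NormedSpace ℝ E] [MeasurableSpace E]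
    (ν' ν : Measure E) : Prop :=
  ∀ θ : E → ℝ, ConvexOn ℝ Set.univ θ →
    eInt (fun y => ((θ y : ℝ) : EReal)) ν' ≤ eInt (fun y => ((θ y : ℝ) : EReal)) ν

/-- The inf-convolution `R_C ψ`. -/
def RC {X Y : Type*} [MeasurableSpace Y] [PseudoMetricSpace Y]
    (r : ℝ) (y₀ : Y) (C : X × Measure Y → EReal) (ψ : Y → ℝ) : X → EReal :=
  fun x => ⨅ p ∈ Pr r y₀, (((-∫ y, ψ y ∂p : ℝ) : EReal) + C (x, p))

/-- `κ` is a regular conditional distribution of `Yv` given the sub-σ-algebra `m1`. -/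
def IsRCD {Ω Y : Type*} [MeasurableSpace Y] (m1 : MeasurableSpace Ω)
    (mΩ : MeasurableSpace Ω) (P : @Measure Ω mΩ) (Yv : Ω → Y) (κ : Ω → Measure Y) : Prop :=
  (∀ ω, IsProbabilityMeasure (κ ω)) ∧ Measurable[m1] κ ∧
    ∀ A : Set Y, MeasurableSet A → ∀ B : Set Ω, MeasurableSet[m1] B →
      P (B ∩ Yv ⁻¹' A) = ∫⁻ ω in B, κ ω A ∂P

end WOT

open WOT

/-!
Write `c (x, y) = C (x, δ_y)`; since `C` is barycentric, `C (x, p) = c (x, b(p))`. Hence a plan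
`P ∈ Λ(μ, ν)` amounts to a law `ρ` of a triple `(x, y, z)` with `x ∼ μ`, `z ∼ ν` and
`E[z - y | x, y] = 0`, whose cost is the expectation of `c (x, y)`: take `y = b(p)` and `z ∼ p`, and
conversely disintegrate `z` given `(x, y)`.

The last two constraints are relaxed by multipliers. The cost `c` is corrected by terms in
`d(x, x₀) ^ r`, `⟨y⟩ ^ r`, `⟨z⟩ ^ r`, where `⟨y⟩ = √(1 + ‖y‖²)`, and the Bregman divergence of
`⟨·⟩ ^ r` between `z` and `y`. The mean of the correction is the same for every feasible `ρ`, and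
the corrected cost is nonnegative and coercive in `(y, z)`. Tightness and a minimax argument yield,
for every level `a`, either a `ρ` at which no multiplier raises the Lagrangian above `a`, so that
`ρ` is feasible with cost at most `a`, or a single multiplier for which the `μ`-average of the
infimum of the Lagrangian over `(y, z)` is at least `a`. In the latter case this infimum gives `φ`,
and an infimum of functions affine in `z` gives a concave `ψ`, so that `(φ, ψ)` is an admissible
dual pair of value at least `a`.
-/

open scoped BoundedContinuousFunction

namespace WOT

section ExtendedIntegral

lemma epos_eq_toENNReal (e : EReal) : epos e = e.toENNReal := rfl

lemma toENNReal_neg_add_coe_le (e : EReal) (a : ℝ) :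
    (-(e + a)).toENNReal ≤ (-e).toENNReal + ENNReal.ofReal (-a) := by
  rw [EReal.neg_add (.inr (EReal.coe_ne_top a)) (.inr (EReal.coe_ne_bot a)), sub_eq_add_neg,
    ← EReal.coe_neg]
  exact EReal.toENNReal_add_le

lemma ofReal_eq_add_ofReal_neg (a : ℝ) :
    (ENNReal.ofReal a).toReal = a + (ENNReal.ofReal (-a)).toReal := by
  rcases le_total 0 a with ha | ha <;> simp [ENNReal.toReal_ofReal', ha]

lemma toENNReal_add_coe_balance (e : EReal) (a : ℝ) :
    (e + a).toENNReal + ((-e).toENNReal + ENNReal.ofReal (-a))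
      = e.toENNReal + ENNReal.ofReal a + (-(e + a)).toENNReal := by
  induction e with
  | bot => simp
  | top => simp
  | coe b =>
    simp only [← EReal.coe_neg, ← EReal.coe_add, EReal.real_coe_toENNReal]
    rw [← ENNReal.toReal_eq_toReal_iff' (by finiteness) (by finiteness)]
    simp only [ENNReal.toReal_add, ENNReal.ofReal_ne_top, ne_eq, not_false_eq_true,
      ENNReal.add_ne_top, and_self]
    linarith [ofReal_eq_add_ofReal_neg a, ofReal_eq_add_ofReal_neg b,
      ofReal_eq_add_ofReal_neg (b + a)]

variable {Ω Ω' : Type*} [MeasurableSpace Ω] [MeasurableSpace Ω'] {P : Measure Ω}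
  {f f' : Ω → EReal} {g : Ω → ℝ}

lemma eInt_mono_ae (h : ∀ᵐ ω ∂P, f ω ≤ f' ω) : eInt f P ≤ eInt f' P := by
  refine EReal.sub_le_sub (EReal.coe_ennreal_le_coe_ennreal_iff.2 ?_)
    (EReal.coe_ennreal_le_coe_ennreal_iff.2 ?_) <;> refine lintegral_mono_ae ?_
  · filter_upwards [h] with ω hω using EReal.toENNReal_le_toENNReal hω
  · filter_upwards [h] with ω hω using
      EReal.toENNReal_le_toENNReal (EReal.neg_le_neg_iff.2 hω)

lemma eInt_congr_ae (h : f =ᵐ[P] f') : eInt f P = eInt f' P :=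
  (eInt_mono_ae h.le).antisymm (eInt_mono_ae h.symm.le)

lemma eInt_map {T : Ω → Ω'} (hT : Measurable T) {f : Ω' → EReal} (hf : Measurable f) :
    eInt f (P.map T) = eInt (fun ω => f (T ω)) P := by
  have hfneg : Measurable fun y => (-f y).toENNReal := hf.neg.ereal_toENNReal
  simp only [eInt, epos_eq_toENNReal, lintegral_map hf.ereal_toENNReal hT,
    lintegral_map hfneg hT]

lemma eInt_of_nonneg (hf : ∀ᵐ ω ∂P, 0 ≤ f ω) :
    eInt f P = (∫⁻ ω, (f ω).toENNReal ∂P : ℝ≥0∞) := by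
  have hneg : ∫⁻ ω, (-f ω).toENNReal ∂P = 0 := by
    rw [lintegral_congr_ae (g := fun _ => 0), lintegral_zero]
    filter_upwards [hf] with ω hω using
      EReal.toENNReal_of_nonpos (by rwa [EReal.neg_le, neg_zero])
  simp [eInt, epos_eq_toENNReal, hneg]

lemma eInt_coe (hg : Integrable g P) :
    eInt (fun ω => (g ω : EReal)) P = ((∫ ω, g ω ∂P : ℝ) : EReal) := by
  have hneg : ∫⁻ ω, ENNReal.ofReal (-g ω) ∂P ≠ ⊤ := hg.neg.lintegral_lt_top.ne
  rw [integral_eq_lintegral_pos_part_sub_lintegral_neg_part hg, EReal.coe_sub,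
    EReal.coe_ennreal_toReal hg.lintegral_lt_top.ne, EReal.coe_ennreal_toReal hneg]
  rfl

lemma le_eInt (hg : Integrable g P) (h : ∀ᵐ ω ∂P, (g ω : EReal) ≤ f ω) :
    ((∫ ω, g ω ∂P : ℝ) : EReal) ≤ eInt f P :=
  (eInt_coe hg).symm.le.trans (eInt_mono_ae h)

lemma coe_sub_coe_eq_add_of_balance {A B G H U W : ℝ≥0∞} (hG : G ≠ ⊤) (hH : H ≠ ⊤)
    (hWB : W ≤ B + H) (hBW : B ≤ W + G) (h : U + (B + H) = A + G + W) :
    (U - W : EReal) = (A - B : EReal) + ((G.toReal - H.toReal : ℝ) : EReal) := by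
  lift G to ℝ≥0 using hG
  lift H to ℝ≥0 using hH
  induction B with
  | top =>
    obtain rfl : W = ⊤ := by simpa using hBW
    simp
  | coe B =>
    lift W to ℝ≥0 using ne_top_of_le_ne_top (by finiteness) hWB
    induction A with
    | top =>
      obtain rfl : U = ⊤ := by simpa using h
      simp only [EReal.coe_ennreal_top, EReal.coe_nnreal_eq_coe_real, EReal.top_sub_coe,
        EReal.top_add_coe]
    | coe A =>
      lift U to ℝ≥0 using fun hU => by simp [hU, eq_comm] at h
      have h' : (U : ℝ) + (B + H) = A + G + W := by exact_mod_cast h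
      simp only [EReal.coe_nnreal_eq_coe_real, ← EReal.coe_sub, ← EReal.coe_add,
        EReal.coe_eq_coe_iff, ENNReal.coe_toReal]
      linarith

lemma eInt_add_coe (hf : AEMeasurable f P) (hg : Integrable g P) :
    eInt (fun ω => f ω + g ω) P = eInt f P + ((∫ ω, g ω ∂P : ℝ) : EReal) := by
  have hf₁ : AEMeasurable (fun ω => (f ω).toENNReal) P := hf.ereal_toENNReal
  have hf₂ : AEMeasurable (fun ω => (-f ω).toENNReal) P := hf.neg.ereal_toENNReal
  have hg₂ : AEMeasurable (fun ω => ENNReal.ofReal (-g ω)) P :=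
    hg.aemeasurable.neg.ennreal_ofReal
  have hfg₂ : AEMeasurable (fun ω => (-(f ω + g ω)).toENNReal) P :=
    (hf.add hg.aemeasurable.coe_real_ereal).neg.ereal_toENNReal
  have hneg : AEMeasurable (fun ω => (-f ω).toENNReal + ENNReal.ofReal (-g ω)) P := hf₂.add hg₂
  rw [integral_eq_lintegral_pos_part_sub_lintegral_neg_part hg]
  refine coe_sub_coe_eq_add_of_balance hg.lintegral_lt_top.ne hg.neg.lintegral_lt_top.ne
    ?_ ?_ ?_ <;> simp only [epos_eq_toENNReal]
  · rw [← lintegral_add_left' hf₂]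
    exact lintegral_mono fun ω => toENNReal_neg_add_coe_le _ _
  · rw [← lintegral_add_left' hfg₂]
    refine lintegral_mono fun ω => ?_
    simpa [EReal.add_sub_cancel_right, ← sub_eq_add_neg] using
      toENNReal_neg_add_coe_le (f ω + g ω) (-g ω)
  · rw [← lintegral_add_left' hf₂, ← lintegral_add_left' hf₁,
      ← lintegral_add_right' _ hneg, ← lintegral_add_right' _ hfg₂]
    exact lintegral_congr fun ω => toENNReal_add_coe_balance _ _

lemma eInt_le_of_lintegral_add_le {l : Ω → ℝ} {a : ℝ} (hf : AEMeasurable f P)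
    (hl : Integrable l P) (hfl : ∀ᵐ ω ∂P, ((-l ω : ℝ) : EReal) ≤ f ω)
    (ha : 0 ≤ a + ∫ ω, l ω ∂P)
    (h : ∫⁻ ω, (f ω + l ω).toENNReal ∂P ≤ ENNReal.ofReal (a + ∫ ω, l ω ∂P)) :
    eInt f P ≤ a := by
  have hnonneg : ∀ᵐ ω ∂P, 0 ≤ f ω + l ω := by
    filter_upwards [hfl] with ω hω
    have := add_le_add_left hω (l ω : EReal)
    rwa [← EReal.coe_add, neg_add_cancel, EReal.coe_zero] at this
  have hle : eInt f P + ((∫ ω, l ω ∂P : ℝ) : EReal) ≤ ((a + ∫ ω, l ω ∂P : ℝ) : EReal) := by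
    rw [← eInt_add_coe hf hl, eInt_of_nonneg hnonneg]
    refine (EReal.coe_ennreal_le_coe_ennreal_iff.2 h).trans_eq ?_
    rw [EReal.coe_ennreal_ofReal, max_eq_left ha]
  have := EReal.sub_le_sub hle (le_refl ((∫ ω, l ω ∂P : ℝ) : EReal))
  rwa [EReal.add_sub_cancel_right, ← EReal.coe_sub, add_sub_cancel_right] at this

end ExtendedIntegral

section GrowthClass

variable {X : Type*} [PseudoMetricSpace X] {r : ℝ} {x₀ : X} {φ ψ : X → ℝ}

lemma PhiR.of_abs_le (hφ : φ ∈ PhiR r x₀) (hψ : Continuous ψ) (h : ∀ x, |ψ x| ≤ |φ x|) :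
    ψ ∈ PhiR r x₀ := by
  obtain ⟨-, K, hK⟩ := hφ
  exact ⟨hψ, K, fun x => (h x).trans (hK x)⟩

lemma PhiR.of_bounded (hφ : Continuous φ) {B : ℝ} (hB : ∀ x, |φ x| ≤ B) : φ ∈ PhiR r x₀ := by
  refine ⟨hφ, B, fun x => (hB x).trans (le_mul_of_one_le_right ((abs_nonneg _).trans (hB x)) ?_)⟩
  linarith [Real.rpow_nonneg (dist_nonneg (x := x) (y := x₀)) r]

lemma PhiR.const_mem (a : ℝ) : (fun _ : X => a) ∈ PhiR r x₀ :=
  .of_bounded continuous_const fun _ => le_rfl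

lemma PhiR.add_mem (hφ : φ ∈ PhiR r x₀) (hψ : ψ ∈ PhiR r x₀) : φ + ψ ∈ PhiR r x₀ := by
  obtain ⟨hφc, K, hK⟩ := hφ
  obtain ⟨hψc, L, hL⟩ := hψ
  refine ⟨hφc.add hψc, K + L, fun x => (abs_add_le _ _).trans ?_⟩
  rw [add_mul]
  exact add_le_add (hK x) (hL x)

lemma PhiR.smul_mem (hφ : φ ∈ PhiR r x₀) (a : ℝ) : a • φ ∈ PhiR r x₀ := by
  obtain ⟨hφc, K, hK⟩ := hφ
  refine ⟨hφc.const_smul a, |a| * K, fun x => ?_⟩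
  rw [Pi.smul_apply, smul_eq_mul, abs_mul, mul_assoc]
  exact mul_le_mul_of_nonneg_left (hK x) (abs_nonneg a)

lemma PhiR.of_le_of_le {ψ₁ ψ₂ : X → ℝ} (hψ₁ : ψ₁ ∈ PhiR r x₀) (hψ₂ : ψ₂ ∈ PhiR r x₀)
    (hψ : Continuous ψ) (h₁ : ∀ x, ψ₁ x ≤ ψ x) (h₂ : ∀ x, ψ x ≤ ψ₂ x) : ψ ∈ PhiR r x₀ := by
  obtain ⟨-, K, hK⟩ := hψ₁
  obtain ⟨-, L, hL⟩ := hψ₂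
  refine ⟨hψ, K + L, fun x => (abs_le_max_abs_abs (h₁ x) (h₂ x)).trans ?_⟩
  rw [add_mul]
  exact max_le_add_of_nonneg (abs_nonneg _) (abs_nonneg _) |>.trans (add_le_add (hK x) (hL x))

lemma PhiR.dist_rpow_mem (hr : 0 ≤ r) (x₀ : X) : (fun x => dist x x₀ ^ r) ∈ PhiR r x₀ := by
  refine ⟨(continuous_id.dist continuous_const).rpow_const fun _ => Or.inr hr, 1, fun x => ?_⟩
  rw [abs_of_nonneg (by positivity)]
  linarith

lemma PhiR.integrable [MeasurableSpace X] [OpensMeasurableSpace X] {μ : Measure X}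
    [IsFiniteMeasure μ] (hr : 0 ≤ r) (hμ : FinMom r x₀ μ) (hφ : φ ∈ PhiR r x₀) :
    Integrable φ μ := by
  have hdist_nonneg : 0 ≤ fun x => dist x x₀ ^ r := fun x => by positivity
  obtain ⟨hφc, K, hK⟩ := hφ
  have hdist : Integrable (fun x => dist x x₀ ^ r) μ :=
    ⟨(PhiR.dist_rpow_mem hr x₀).1.measurable.aestronglyMeasurable,
      (hasFiniteIntegral_iff_ofReal (.of_forall hdist_nonneg)).2 hμ⟩
  exact (((integrable_const (1 : ℝ)).add hdist).const_mul K).mono'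
    hφc.measurable.aestronglyMeasurable (.of_forall hK)

end GrowthClass

section Weight

/-- The Japanese bracket `⟨y⟩ = (1 + ‖y‖²)^{1/2}`. -/
def bracket {E : Type*} [NormedAddCommGroup E] (y : E) : ℝ := √(1 + ‖y‖ ^ 2)

/-- The weight `⟨y⟩ ^ r`: a differentiable convex function of the same growth as `1 + ‖y‖ ^ r`,
also for `r = 1`. -/
def weight {E : Type*} [NormedAddCommGroup E] (r : ℝ) (y : E) : ℝ := bracket y ^ r

variable {E : Type*} [NormedAddCommGroup E]

lemma one_le_bracket (y : E) : 1 ≤ bracket y := by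
  rw [bracket, Real.one_le_sqrt]
  nlinarith [sq_nonneg ‖y‖]

lemma bracket_pos (y : E) : 0 < bracket y := one_pos.trans_le (one_le_bracket y)

lemma bracket_sq (y : E) : bracket y ^ 2 = 1 + ‖y‖ ^ 2 := Real.sq_sqrt (by positivity)

lemma norm_le_bracket (y : E) : ‖y‖ ≤ bracket y := Real.le_sqrt_of_sq_le (by linarith)

lemma continuous_bracket : Continuous (bracket : E → ℝ) := by
  unfold bracket
  fun_prop

lemma continuous_bracket_rpow (r : ℝ) : Continuous fun y : E => bracket y ^ r :=
  continuous_bracket.rpow_const fun y => Or.inl (bracket_pos y).ne'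

lemma continuous_weight (r : ℝ) : Continuous (weight r : E → ℝ) := continuous_bracket_rpow r

variable {r : ℝ}

lemma one_le_weight (hr : 0 ≤ r) (y : E) : 1 ≤ weight r y :=
  Real.one_le_rpow (one_le_bracket y) hr

lemma norm_rpow_le_weight (hr : 0 ≤ r) (y : E) : ‖y‖ ^ r ≤ weight r y :=
  Real.rpow_le_rpow (norm_nonneg y) (norm_le_bracket y) hr

lemma norm_le_weight (hr : 1 ≤ r) (y : E) : ‖y‖ ≤ weight r y :=
  (norm_le_bracket y).trans (Real.self_le_rpow_of_one_le (one_le_bracket y) hr)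

lemma weight_le (hr : 1 ≤ r) (y : E) : weight r y ≤ 2 ^ (r - 1) * (1 + ‖y‖ ^ r) := by
  have hpow : (1 + ‖y‖) ^ r ≤ 2 ^ (r - 1) * (1 + ‖y‖ ^ r) := by
    have := NNReal.rpow_add_le_mul_rpow_add_rpow 1 ‖y‖₊ hr
    rw [NNReal.one_rpow] at this
    exact_mod_cast this
  exact (Real.rpow_le_rpow (bracket_pos y).le (sqrt_one_add_norm_sq_le y) (by linarith)).trans hpow

lemma PhiR.weight_mem (hr : 1 ≤ r) : (weight r : E → ℝ) ∈ PhiR r (0 : E) := by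
  refine ⟨continuous_weight r, 2 ^ (r - 1), fun y => ?_⟩
  rw [abs_of_nonneg (by linarith [one_le_weight (by linarith) y]), dist_zero_right]
  exact weight_le hr y

lemma PhiR.norm_mem (hr : 1 ≤ r) : (fun y : E => ‖y‖) ∈ PhiR r (0 : E) :=
  PhiR.of_abs_le (PhiR.weight_mem hr) continuous_norm fun y => by
    rw [abs_norm]
    exact (norm_le_weight hr y).trans (le_abs_self _)

lemma PhiR.const_add_inner_mem [InnerProductSpace ℝ E] (hr : 1 ≤ r) (c : ℝ) (g y : E) :
    (fun z => c + ⟪g, z - y⟫) ∈ PhiR r (0 : E) := by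
  have hinner : (fun z => ⟪g, z⟫) ∈ PhiR r (0 : E) :=
    PhiR.of_abs_le (PhiR.smul_mem (PhiR.norm_mem hr) ‖g‖) (by fun_prop) fun z =>
      (abs_real_inner_le_norm g z).trans (le_abs_self _)
  convert PhiR.add_mem hinner (PhiR.const_mem (c - ⟪g, y⟫)) using 1
  ext z
  rw [Pi.add_apply, inner_sub_right]
  ring

variable [InnerProductSpace ℝ E]

/-- The gradient of `weight r`. -/
def weightGrad (r : ℝ) (y : E) : E := (r * bracket y ^ (r - 2)) • y

/-- The Bregman divergence `⟨z⟩ ^ r - ⟨y⟩ ^ r - ⟪∇⟨y⟩ ^ r, z - y⟫` of the weight. -/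
def weightBregman (r : ℝ) (y z : E) : ℝ := weight r z - weight r y - ⟪weightGrad r y, z - y⟫

lemma continuous_weightGrad (r : ℝ) : Continuous (weightGrad r : E → E) :=
  (continuous_const.mul (continuous_bracket_rpow _)).smul continuous_id

lemma continuous_weightBregman {Z : Type*} [TopologicalSpace Z] {f g : Z → E}
    (hf : Continuous f) (hg : Continuous g) : Continuous fun p => weightBregman r (f p) (g p) :=
  (((continuous_weight r).comp hg).sub ((continuous_weight r).comp hf)).sub
    (((continuous_weightGrad r).comp hf).inner (hg.sub hf))

lemma one_add_inner_le_bracket_mul (y z : E) : 1 + ⟪y, z⟫ ≤ bracket y * bracket z := by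
  have hnorm : 1 + ‖y‖ * ‖z‖ ≤ bracket y * bracket z := by
    refine (sq_le_sq₀ (by positivity) (mul_pos (bracket_pos y) (bracket_pos z)).le).1 ?_
    rw [mul_pow, bracket_sq, bracket_sq]
    nlinarith [sq_nonneg (‖y‖ - ‖z‖)]
  linarith [real_inner_le_norm y z]

/- Bernoulli's inequality for `⟨z⟩ / ⟨y⟩` bounds `⟨z⟩ ^ r` from below by its tangent at `⟨y⟩`;
Cauchy–Schwarz compares the increments of `⟨·⟩` and of its linearisation. -/
lemma weightBregman_nonneg (hr : 1 ≤ r) (y z : E) : 0 ≤ weightBregman r y z := by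
  have hs := bracket_pos y
  have hdecomp : bracket y ^ r = bracket y ^ (r - 2) * bracket y ^ 2 := by
    rw [← Real.rpow_natCast, ← Real.rpow_add hs]
    norm_num
  have htangent : bracket y ^ r + r * bracket y ^ (r - 2) * (bracket y * bracket z - bracket y ^ 2)
      ≤ bracket z ^ r := by
    have hratio : -1 ≤ bracket z / bracket y - 1 := by
      linarith [div_nonneg (bracket_pos z).le hs.le]
    have hbernoulli := one_add_mul_self_le_rpow_one_add hratio hr
    rw [add_sub_cancel, Real.div_rpow (bracket_pos z).le hs.le,
      le_div_iff₀ (Real.rpow_pos_of_pos hs r)] at hbernoulli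
    refine le_of_eq_of_le ?_ hbernoulli
    rw [hdecomp]
    field_simp
  have hgrad : ⟪weightGrad r y, z - y⟫
      ≤ r * bracket y ^ (r - 2) * (bracket y * bracket z - bracket y ^ 2) := by
    have hcoef : 0 ≤ r * bracket y ^ (r - 2) := by positivity [bracket_pos y]
    rw [weightGrad, real_inner_smul_left, inner_sub_right, real_inner_self_eq_norm_sq]
    refine mul_le_mul_of_nonneg_left ?_ hcoef
    linarith [one_add_inner_le_bracket_mul y z, bracket_sq y]
  unfold weightBregman weight
  linarith

end Weight

section Supergradient

lemma exists_supergradient {E : Type*} [NormedAddCommGroup E] [InnerProductSpace ℝ E]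
    [CompleteSpace E] {ψ : E → ℝ} (hψc : Continuous ψ) (hψ : ConcaveOn ℝ univ ψ) (y : E) :
    ∃ g : E, ∀ z, ψ z ≤ ψ y + ⟪g, z - y⟫ := by
  have hopen : IsOpen {p : E × ℝ | p.1 ∈ (univ : Set E) ∧ p.2 < ψ p.1} := by
    simp only [mem_univ, true_and]
    exact isOpen_lt continuous_snd (hψc.comp continuous_fst)
  obtain ⟨f, hf⟩ := geometric_hahn_banach_open_point (x := (y, ψ y)) hψ.convex_strict_hypograph
    hopen (by simp)
  set l : E →L[ℝ] ℝ := f.comp (.inl ℝ E ℝ)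
  have hsplit (z : E) (t : ℝ) : f (z, t) = l z + t * f (0, 1) := by
    rw [← smul_eq_mul, ← map_smul]
    simp [l, ← map_add]
  have hpos : 0 < f (0, 1) := by
    have := hf (y, ψ y - 1) (by simp)
    rw [hsplit, hsplit y] at this
    linarith
  have hle (z : E) : l z + ψ z * f (0, 1) ≤ l y + ψ y * f (0, 1) := by
    refine le_of_forall_lt_imp_le_of_dense fun c hc => ?_
    have hc' : (c - l z) / f (0, 1) < ψ z := (div_lt_iff₀ hpos).2 (by linarith)
    have := (hf (z, (c - l z) / f (0, 1)) ⟨mem_univ _, hc'⟩).le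
    rw [hsplit, hsplit y, div_mul_cancel₀ _ hpos.ne'] at this
    linarith
  refine ⟨-(f (0, 1))⁻¹ • (InnerProductSpace.toDual ℝ E).symm l, fun z => ?_⟩
  rw [real_inner_smul_left, InnerProductSpace.toDual_symm_apply, map_sub]
  refine le_of_mul_le_mul_right ?_ hpos
  field_simp
  linarith [hle z]

end Supergradient

section LowerSemicontinuous

variable {Z : Type*} [PseudoMetricSpace Z] {F : Z → ℝ≥0∞}

/-- The Pasch–Hausdorff envelope of `min F n`, its largest `n`-Lipschitz minorant: the `n`-th
continuous approximation from below of a lower semicontinuous `F`. -/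
def paschHausdorff (F : Z → ℝ≥0∞) (n : ℕ) (w : Z) : ℝ≥0 :=
  ⨅ v, ((min (F v) n).toNNReal + n * nndist w v)

lemma coe_paschHausdorff_le_min (F : Z → ℝ≥0∞) (n : ℕ) (w : Z) :
    (paschHausdorff F n w : ℝ≥0∞) ≤ min (F w) n := by
  have hself : paschHausdorff F n w ≤ (min (F w) n).toNNReal :=
    (ciInf_le (OrderBot.bddBelow _) w).trans_eq (by simp)
  exact (ENNReal.coe_le_coe.2 hself).trans_eq (ENNReal.coe_toNNReal (by simp))

lemma coe_paschHausdorff_le (F : Z → ℝ≥0∞) (n : ℕ) (w : Z) :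
    (paschHausdorff F n w : ℝ≥0∞) ≤ F w :=
  (coe_paschHausdorff_le_min F n w).trans (min_le_left _ _)

lemma paschHausdorff_le_natCast (F : Z → ℝ≥0∞) (n : ℕ) (w : Z) : paschHausdorff F n w ≤ n := by
  exact_mod_cast (coe_paschHausdorff_le_min F n w).trans (min_le_right _ _)

lemma continuous_paschHausdorff (F : Z → ℝ≥0∞) (n : ℕ) : Continuous (paschHausdorff F n) := by
  have hle (w w' : Z) : paschHausdorff F n w ≤ paschHausdorff F n w' + n * nndist w w' := by
    have : Nonempty Z := ⟨w⟩
    refine tsub_le_iff_right.1 (le_ciInf fun v => tsub_le_iff_right.2 ?_)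
    refine (ciInf_le (OrderBot.bddBelow _) v).trans ?_
    rw [add_assoc, ← mul_add, add_comm (nndist w' v)]
    gcongr
    exact nndist_triangle w w' v
  have hlip : LipschitzWith n fun w => (paschHausdorff F n w : ℝ) :=
    .of_le_add_mul _ fun w w' => by exact_mod_cast hle w w'
  exact continuous_induced_rng.2 hlip.continuous

lemma monotone_paschHausdorff (F : Z → ℝ≥0∞) : Monotone (paschHausdorff F) := fun n m hnm w => by
  refine ciInf_mono (OrderBot.bddBelow _) fun v => ?_
  gcongr
  simp

lemma iSup_coe_paschHausdorff (hF : LowerSemicontinuous F) (w : Z) :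
    ⨆ n, (paschHausdorff F n w : ℝ≥0∞) = F w := by
  refine le_antisymm (iSup_le fun n => coe_paschHausdorff_le F n w) (le_of_forall_lt fun b hb => ?_)
  obtain ⟨c, hbc, hc⟩ := exists_between hb
  lift c to ℝ≥0 using hc.ne_top
  obtain ⟨δ, hδ, hball⟩ := Metric.eventually_nhds_iff.1 (hF w c hc)
  lift δ to ℝ≥0 using hδ.le
  obtain ⟨n, hn⟩ := exists_nat_ge (max c (c / δ))
  have : Nonempty Z := ⟨w⟩
  refine hbc.trans_le (le_iSup_of_le n (ENNReal.coe_le_coe.2 (le_ciInf fun v => ?_)))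
  rcases lt_or_ge (nndist w v) δ with hv | hv
  · have hcn : (c : ℝ≥0∞) ≤ n := by exact_mod_cast (le_max_left _ _).trans hn
    refine le_add_of_le_left (ENNReal.le_toNNReal_of_coe_le (le_min (hball ?_).le hcn) (by simp))
    rwa [dist_comm]
  · have hδn : c ≤ n * δ := (div_le_iff₀ hδ).1 ((le_max_right _ _).trans hn)
    exact le_add_of_le_right (hδn.trans (by gcongr))

lemma exists_seq_boundedContinuousFunction_iSup_eq (hF : LowerSemicontinuous F) :
    ∃ f : ℕ → BoundedContinuousFunction Z ℝ≥0,
      (∀ z, Monotone fun n => f n z) ∧ ∀ z, ⨆ n, (f n z : ℝ≥0∞) = F z := by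
  refine ⟨fun n => .mkOfBound ⟨paschHausdorff F n, continuous_paschHausdorff F n⟩ n fun z w => ?_,
    fun z n m hnm => monotone_paschHausdorff F hnm z, iSup_coe_paschHausdorff hF⟩
  have hz : (paschHausdorff F n z : ℝ) ≤ n := by exact_mod_cast paschHausdorff_le_natCast F n z
  have hw : (paschHausdorff F n w : ℝ) ≤ n := by exact_mod_cast paschHausdorff_le_natCast F n w
  exact (NNReal.dist_eq _ _).trans_le (abs_sub_le_of_nonneg_of_le (by simp) hz (by simp) hw)

lemma lowerSemicontinuous_lintegral [MeasurableSpace Z] [OpensMeasurableSpace Z]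
    (hF : LowerSemicontinuous F) :
    LowerSemicontinuous fun π : ProbabilityMeasure Z => ∫⁻ z, F z ∂(π : Measure Z) := by
  obtain ⟨f, hf, hfF⟩ := exists_seq_boundedContinuousFunction_iSup_eq hF
  have hsup (π : ProbabilityMeasure Z) :
      ∫⁻ z, F z ∂(π : Measure Z) = ⨆ n, ∫⁻ z, f n z ∂(π : Measure Z) := by
    simp_rw [← hfF]
    refine lintegral_iSup (fun n => (f n).continuous.measurable.coe_nnreal_ennreal)
      fun n m hnm z => ENNReal.coe_le_coe.2 (hf z hnm)
  simp_rw [hsup]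
  exact lowerSemicontinuous_iSup fun n =>
    (ProbabilityMeasure.continuous_lintegral_boundedContinuousFunction (f n)).lowerSemicontinuous

end LowerSemicontinuous

section Minimax

lemma apply_single_nonneg_of_forall_lt {ι : Type*} [DecidableEq ι] {f : (ι → ℝ) →ₗ[ℝ] ℝ}
    {s : ι → ℝ} {u : ℝ} (hf : ∀ v, (∀ i, v i < s i) → f v < u) (i : ι) :
    0 ≤ f (Pi.single i 1) := by
  by_contra! hneg
  obtain ⟨t, ht⟩ := exists_nat_ge ((u - f (s - 1)) / -f (Pi.single i 1))
  have hlt := hf (s - 1 - (t : ℝ) • Pi.single i 1) fun j => by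
    have hsingle : (0 : ι → ℝ) ≤ Pi.single i 1 := Pi.single_nonneg.2 zero_le_one
    have := mul_nonneg t.cast_nonneg (hsingle j)
    simp only [Pi.sub_apply, Pi.one_apply, Pi.smul_apply, smul_eq_mul]
    linarith
  rw [map_sub, map_smul, smul_eq_mul] at hlt
  rw [div_le_iff₀ (neg_pos.2 hneg)] at ht
  linarith

lemma exists_mem_stdSimplex_forall_sum_le {ι : Type*} [Fintype ι] [Nonempty ι] {S : Set (ι → ℝ)}
    (hS : Convex ℝ S) {s : ι → ℝ} (h : ∀ v ∈ S, ∃ i, s i ≤ v i) :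
    ∃ w ∈ stdSimplex ℝ ι, ∀ v ∈ S, ∑ i, w i * s i ≤ ∑ i, w i * v i := by
  classical
  rcases S.eq_empty_or_nonempty with rfl | ⟨v₀, hv₀⟩
  · exact ⟨Pi.single (Classical.arbitrary ι) 1, single_mem_stdSimplex ℝ _, by simp⟩
  set O : Set (ι → ℝ) := univ.pi fun i => Iio (s i)
  obtain ⟨f, u, hfO, hfS⟩ := geometric_hahn_banach_open (convex_pi fun i _ => convex_Iio (s i))
    (isOpen_set_pi finite_univ fun i _ => isOpen_Iio) hS <| disjoint_left.2 fun v hvO hvS =>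
      (h v hvS).elim fun i hi => (hvO i (mem_univ i)).not_ge hi
  set w : ι → ℝ := fun i => f (Pi.single i 1)
  have hfw (v : ι → ℝ) : f v = ∑ i, w i * v i := by
    conv_lhs => rw [pi_eq_sum_univ' v, map_sum]
    exact Finset.sum_congr rfl fun i _ => by rw [map_smul, smul_eq_mul, mul_comm]
  have hfs : f s ≤ u :=
    ContinuousWithinAt.closure_le (s := O) (by simp [O, closure_pi_set])
      f.continuous.continuousWithinAt continuousWithinAt_const fun v hv => (hfO v hv).le
  have hw (i : ι) : 0 ≤ w i :=
    apply_single_nonneg_of_forall_lt (f := f.toLinearMap) (fun v hv => hfO v fun j _ => hv j) i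
  have hsum : 0 < ∑ i, w i := (Finset.sum_nonneg fun i _ => hw i).lt_of_ne' fun h0 => by
    have hzero (v : ι → ℝ) : f v = 0 := by
      rw [hfw]
      exact Finset.sum_eq_zero fun i hi => by
        rw [(Finset.sum_eq_zero_iff_of_nonneg fun i _ => hw i).1 h0 i hi, zero_mul]
    have := (hfO (s - 1) fun i _ => by simp).trans_le (hfS v₀ hv₀)
    rw [hzero, hzero] at this
    exact this.false
  refine ⟨fun i => w i / ∑ j, w j, ⟨fun i => div_nonneg (hw i) hsum.le, ?_⟩, fun v hv => ?_⟩
  · rw [← Finset.sum_div, div_self hsum.ne']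
  · have := hfs.trans (hfS v hv)
    rw [hfw, hfw] at this
    simp only [div_mul_eq_mul_div, ← Finset.sum_div]
    gcongr

variable {Z I : Type*} [MeasurableSpace Z] {G : I → Z → ℝ} {s : I → ℝ} {Q : Set (Measure Z)}

lemma exists_mem_stdSimplex_forall_integral_le [Fintype I] [Nonempty I] (hQ : Convex ℝ≥0 Q)
    (h : ∀ π ∈ Q, (∀ i, Integrable (G i) π) → ∃ i, s i ≤ ∫ z, G i z ∂π) :
    ∃ w ∈ stdSimplex ℝ I, ∀ π ∈ Q, (∀ i, Integrable (G i) π) →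
      ∑ i, w i * s i ≤ ∑ i, w i * ∫ z, G i z ∂π := by
  let S : Set (I → ℝ) :=
    (fun π i => ∫ z, G i z ∂π) '' {π | π ∈ Q ∧ ∀ i, Integrable (G i) π}
  have hS : Convex ℝ S := by
    rintro _ ⟨π, ⟨hπ, hπG⟩, rfl⟩ _ ⟨ρ, ⟨hρ, hρG⟩, rfl⟩ a b ha hb hab
    lift a to ℝ≥0 using ha
    lift b to ℝ≥0 using hb
    refine ⟨a • π + b • ρ, ⟨hQ hπ hρ a.2 b.2 (by exact_mod_cast hab), fun i =>
      (hπG i).smul_measure_nnreal.add_measure (hρG i).smul_measure_nnreal⟩, funext fun i => ?_⟩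
    change ∫ z, G i z ∂(a • π + b • ρ) = _
    rw [integral_add_measure (hπG i).smul_measure_nnreal (hρG i).smul_measure_nnreal,
      integral_smul_nnreal_measure, integral_smul_nnreal_measure]
    rfl
  obtain ⟨w, hw, hwS⟩ := exists_mem_stdSimplex_forall_sum_le hS (s := s) <| by
    rintro _ ⟨π, ⟨hπ, hπG⟩, rfl⟩
    exact h π hπ hπG
  exact ⟨w, hw, fun π hπ hπG => hwS _ ⟨π, ⟨hπ, hπG⟩, rfl⟩⟩

lemma exists_finset_stdSimplex_forall_integral_le [PseudoMetricSpace Z] [OpensMeasurableSpace Z]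
    (hGc : ∀ i, Continuous (G i)) (hG0 : ∀ i z, 0 ≤ G i z) (hQ : Convex ℝ≥0 Q)
    (hQprob : ∀ π ∈ Q, IsProbabilityMeasure π) {M : Set (ProbabilityMeasure Z)} (hM : IsCompact M)
    (i₀ : I) (hQM : ∀ π : ProbabilityMeasure Z, (π : Measure Z) ∈ Q → π ∉ M →
      ENNReal.ofReal (s i₀) < ∫⁻ z, ENNReal.ofReal (G i₀ z) ∂(π : Measure Z))
    (hMG : ∀ π ∈ M, ∃ i, ENNReal.ofReal (s i) < ∫⁻ z, ENNReal.ofReal (G i z) ∂(π : Measure Z)) :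
    ∃ t : Finset I, ∃ w ∈ stdSimplex ℝ t, ∀ π ∈ Q, (∀ i : t, Integrable (G i) π) →
      ∑ i, w i * s i ≤ ∑ i, w i * ∫ z, G i z ∂π := by
  classical
  have hopen (i : I) : IsOpen {π : ProbabilityMeasure Z |
      ENNReal.ofReal (s i) < ∫⁻ z, ENNReal.ofReal (G i z) ∂(π : Measure Z)} :=
    (lowerSemicontinuous_lintegral
      (ENNReal.continuous_ofReal.comp (hGc i)).lowerSemicontinuous).isOpen_preimage _
  obtain ⟨t, ht⟩ := hM.elim_finite_subcover _ hopen fun π hπ => mem_iUnion.2 (hMG π hπ)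
  have hcover (π : ProbabilityMeasure Z) (hπ : (π : Measure Z) ∈ Q) : ∃ i ∈ insert i₀ t,
      ENNReal.ofReal (s i) < ∫⁻ z, ENNReal.ofReal (G i z) ∂(π : Measure Z) := by
    by_cases hπM : π ∈ M
    · obtain ⟨i, hi, hlt⟩ := mem_iUnion₂.1 (ht hπM)
      exact ⟨i, Finset.mem_insert_of_mem hi, hlt⟩
    · exact ⟨i₀, Finset.mem_insert_self _ _, hQM π hπ hπM⟩
  have : Nonempty ↥(insert i₀ t) := ⟨⟨i₀, Finset.mem_insert_self _ _⟩⟩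
  refine ⟨insert i₀ t, exists_mem_stdSimplex_forall_integral_le (G := fun i : ↥(insert i₀ t) => G i)
    (s := fun i => s i) hQ fun π hπ hπG => ?_⟩
  obtain ⟨i, hit, hlt⟩ := hcover ⟨π, hQprob π hπ⟩ hπ
  have hlt : ENNReal.ofReal (s i) < ENNReal.ofReal (∫ z, G i z ∂π) := by
    rwa [ofReal_integral_eq_lintegral_ofReal (hπG ⟨i, hit⟩) (.of_forall (hG0 i))]
  exact ⟨⟨i, hit⟩, (ENNReal.ofReal_lt_ofReal_iff'.1 hlt).1.le⟩

end Minimax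

section Plans

lemma convex_setOfPred_map_eq {Z X : Type*} [MeasurableSpace Z] [MeasurableSpace X] {T : Z → X}
    (hT : Measurable T) (μ : Measure X) : Convex ℝ≥0 {π : Measure Z | π.map T = μ} := by
  intro π hπ ρ hρ a b _ _ hab
  rw [mem_ofPred_eq] at hπ hρ ⊢
  rw [Measure.map_add _ _ hT, Measure.map_smul, Measure.map_smul, hπ, hρ, ← add_smul, hab, one_smul]

lemma isClosed_setOfPred_map_eq {Z X : Type*} [TopologicalSpace Z] [MeasurableSpace Z]
    [OpensMeasurableSpace Z] [TopologicalSpace X] [HasOuterApproxClosed X] [MeasurableSpace X]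
    [BorelSpace X] {T : Z → X} (hT : Continuous T) (μ : Measure X) [IsProbabilityMeasure μ] :
    IsClosed {π : ProbabilityMeasure Z | (π : Measure Z).map T = μ} := by
  have hpreimage : {π : ProbabilityMeasure Z | (π : Measure Z).map T = μ} =
      (fun π => π.map hT.measurable.aemeasurable) ⁻¹' {⟨μ, inferInstance⟩} := by
    ext π
    exact (Subtype.ext_iff (a1 := π.map hT.measurable.aemeasurable)
      (a2 := (⟨μ, inferInstance⟩ : ProbabilityMeasure X))).symm
  rw [hpreimage]
  exact isClosed_singleton.preimage (ProbabilityMeasure.continuous_map hT)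

lemma isTightMeasureSet_of_lintegral_enorm_le {E : Type*} [NormedAddCommGroup E] [ProperSpace E]
    [MeasurableSpace E] [OpensMeasurableSpace E] {S : Set (Measure E)} {c : ℝ≥0∞} (hc : c ≠ ⊤)
    (h : ∀ π ∈ S, ∫⁻ y, ‖y‖ₑ ∂π ≤ c) : IsTightMeasureSet S := by
  rw [isTightMeasureSet_iff_exists_isCompact_measure_compl_le]
  intro ε hε
  obtain ⟨n, hn⟩ := ENNReal.exists_nat_gt (ENNReal.div_lt_top hc hε.ne').ne
  have hn0 : (n : ℝ≥0∞) ≠ 0 := (bot_le.trans_lt hn).ne'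
  refine ⟨Metric.closedBall 0 n, isCompact_closedBall 0 _, fun π hπ => ?_⟩
  have hsub : (Metric.closedBall (0 : E) n)ᶜ ⊆ {y | (n : ℝ≥0∞) ≤ ‖y‖ₑ} := fun y hy => by
    rw [mem_compl_iff, mem_closedBall_zero_iff, not_le] at hy
    rw [mem_ofPred_eq, ← ofReal_norm, ← ENNReal.ofReal_natCast]
    exact ENNReal.ofReal_le_ofReal hy.le
  calc π (Metric.closedBall 0 n)ᶜ ≤ (∫⁻ y, ‖y‖ₑ ∂π) / n :=
        (measure_mono hsub).trans (meas_ge_le_lintegral_div measurable_enorm.aemeasurable hn0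
          (ENNReal.natCast_ne_top n))
    _ ≤ c / n := by gcongr; exact h π hπ
    _ ≤ ε := by
      rw [ENNReal.div_le_iff hn0 (ENNReal.natCast_ne_top n), mul_comm]
      exact ((ENNReal.div_lt_iff (.inl hε.ne') (.inr hc)).1 hn).le

variable {X E : Type*} [MetricSpace X] [CompleteSpace X] [SecondCountableTopology X]
  [MeasurableSpace X] [BorelSpace X] [NormedAddCommGroup E] [ProperSpace E]
  [MeasurableSpace E] [BorelSpace E]

lemma isTightMeasureSet_setOfPred_map_eq_lintegral_le (μ : Measure X) [IsFiniteMeasure μ]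
    {V : (X × E) × E → ℝ≥0∞} (hV : ∀ p, ‖p.1.2‖ₑ ≤ V p ∧ ‖p.2‖ₑ ≤ V p) {c : ℝ≥0∞} (hc : c ≠ ⊤) :
    IsTightMeasureSet
      {π : Measure ((X × E) × E) | π.map (fun p => p.1.1) = μ ∧ ∫⁻ p, V p ∂π ≤ c} := by
  refine .prodMk (.prodMk ?_ ?_) ?_
  · refine isTightMeasureSet_singleton (μ := μ) |>.subset ?_
    rintro _ ⟨_, ⟨π, ⟨hπ, -⟩, rfl⟩, rfl⟩
    rw [Measure.fst, Measure.fst, Measure.map_map measurable_fst measurable_fst]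
    exact hπ
  · refine isTightMeasureSet_of_lintegral_enorm_le hc ?_
    rintro _ ⟨_, ⟨π, ⟨-, hπ⟩, rfl⟩, rfl⟩
    rw [Measure.snd, Measure.fst, Measure.map_map measurable_snd measurable_fst,
      lintegral_map measurable_enorm (measurable_snd.comp measurable_fst)]
    exact (lintegral_mono fun p => (hV p).1).trans hπ
  · refine isTightMeasureSet_of_lintegral_enorm_le hc ?_
    rintro _ ⟨π, ⟨-, hπ⟩, rfl⟩
    rw [Measure.snd, lintegral_map measurable_enorm measurable_snd]
    exact (lintegral_mono fun p => (hV p).2).trans hπ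

lemma isCompact_setOfPred_map_eq_lintegral_le (μ : Measure X) [IsProbabilityMeasure μ]
    {V : (X × E) × E → ℝ≥0∞} (hVc : LowerSemicontinuous V)
    (hV : ∀ p, ‖p.1.2‖ₑ ≤ V p ∧ ‖p.2‖ₑ ≤ V p) {c : ℝ≥0∞} (hc : c ≠ ⊤) :
    IsCompact {π : ProbabilityMeasure ((X × E) × E) |
      (π : Measure ((X × E) × E)).map (fun p => p.1.1) = μ ∧
        ∫⁻ p, V p ∂(π : Measure ((X × E) × E)) ≤ c} := by
  have hclosed : IsClosed {π : ProbabilityMeasure ((X × E) × E) |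
      (π : Measure ((X × E) × E)).map (fun p => p.1.1) = μ ∧
        ∫⁻ p, V p ∂(π : Measure ((X × E) × E)) ≤ c} :=
    (isClosed_setOfPred_map_eq (continuous_fst.comp continuous_fst) μ).inter
      ((lowerSemicontinuous_lintegral hVc).isClosed_preimage c)
  rw [← hclosed.closure_eq]
  refine isCompact_closure_of_isTightMeasureSet
    ((isTightMeasureSet_setOfPred_map_eq_lintegral_le μ hV hc).subset ?_)
  rintro _ ⟨π, hπ, rfl⟩
  exact hπ

lemma isCompact_setOfPred_map_eq_lintegral_weight_le (μ : Measure X) [IsProbabilityMeasure μ]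
    {r : ℝ} (hr : 1 ≤ r) {c : ℝ≥0∞} (hc : c ≠ ⊤) :
    IsCompact {π : ProbabilityMeasure ((X × E) × E) |
      (π : Measure ((X × E) × E)).map (fun p => p.1.1) = μ ∧
        ∫⁻ p, ENNReal.ofReal (weight r p.1.2 + weight r p.2) ∂(π : Measure ((X × E) × E)) ≤ c} := by
  have hcont : Continuous fun p : (X × E) × E => weight r p.1.2 + weight r p.2 :=
    ((continuous_weight r).comp (by fun_prop)).add ((continuous_weight r).comp (by fun_prop))
  refine isCompact_setOfPred_map_eq_lintegral_le μ
    (ENNReal.continuous_ofReal.comp hcont).lowerSemicontinuous (fun p => ?_) hc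
  simp_rw [← ofReal_norm]
  constructor <;> refine ENNReal.ofReal_le_ofReal ?_ <;>
    linarith [norm_le_weight hr p.1.2, norm_le_weight hr p.2, norm_nonneg p.1.2, norm_nonneg p.2]

end Plans

section Penalty

variable {X E : Type*} [NormedAddCommGroup E] [InnerProductSpace ℝ E] {r K : ℝ}

/-- The penalty `⟨y⟩ ^ r + ⟨z⟩ ^ r + (K + 1) D(y, z)` with `D` the Bregman divergence: coercive in
`(y, z)`, yet with a mean determined by the marginal laws whenever `E[z | x, y] = y`. -/
def penalty (r K : ℝ) (p : (X × E) × E) : ℝ :=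
  weight r p.1.2 + weight r p.2 + (K + 1) * weightBregman r p.1.2 p.2

lemma weight_add_weight_le_penalty (hr : 1 ≤ r) (hK : 0 ≤ K) (p : (X × E) × E) :
    weight r p.1.2 + weight r p.2 ≤ penalty r K p :=
  le_add_of_nonneg_right (mul_nonneg (by linarith) (weightBregman_nonneg hr _ _))

lemma continuous_penalty [TopologicalSpace X] (r K : ℝ) :
    Continuous (penalty r K : (X × E) × E → ℝ) := by
  have hweight : Continuous (weight r : E → ℝ) := continuous_weight r
  have hbregman : Continuous fun p : (X × E) × E => weightBregman r p.1.2 p.2 :=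
    continuous_weightBregman (continuous_snd.comp continuous_fst) continuous_snd
  unfold penalty
  fun_prop

end Penalty

section Multipliers

variable {X E : Type*} [TopologicalSpace X] [NormedAddCommGroup E]

/-- Triples `(f, ψ, h)` of multipliers for the primal problem over laws of `(x, y, z)`: `f` stands
for a continuous minorant of the cost of `(x, y)`, `ψ` tests the law of `z`, and `h` tests the
martingale property `E[z | x, y] = y`. -/
abbrev Multiplier (X E : Type*) [TopologicalSpace X] [NormedAddCommGroup E] :=
  (X × E →ᵇ ℝ) × (E → ℝ) × (X × E →ᵇ E)

variable [InnerProductSpace ℝ E] {r K : ℝ} {F : X × E → ℝ≥0∞} {u : Multiplier X E}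

/-- Admissibility of `(f, ψ, h)`: both `f ≥ 0` and `ψ(z) + ⟪h(x, y), z - y⟫ ≥ 0`, which makes the
Lagrangian coercive, and `f` is dominated by the cost `F`. -/
structure IsAdmissible (r : ℝ) (F : X × E → ℝ≥0∞) (u : Multiplier X E) : Prop where
  nonneg : ∀ w, 0 ≤ u.1 w
  le : ∀ w, ENNReal.ofReal (u.1 w) ≤ F w
  growth : u.2.1 ∈ PhiR r (0 : E)
  gap_nonneg : ∀ w z, 0 ≤ u.2.1 z + ⟪u.2.2 w, z - w.2⟫

/-- The integrand of the penalised Lagrangian at the multiplier `u = (f, ψ, h)`. -/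
def lagrangian (r K : ℝ) (u : Multiplier X E) (p : (X × E) × E) : ℝ :=
  u.1 p.1 + penalty r K p + (u.2.1 p.2 + ⟪u.2.2 p.1, p.2 - p.1.2⟫)

lemma IsAdmissible.continuous_lagrangian (hu : IsAdmissible r F u) :
    Continuous (lagrangian r K u) := by
  have := hu.growth.1
  have := continuous_penalty (X := X) (E := E) r K
  unfold lagrangian
  fun_prop

lemma IsAdmissible.penalty_le_lagrangian (hu : IsAdmissible r F u) (p : (X × E) × E) :
    penalty r K p ≤ lagrangian r K u p := by
  unfold lagrangian
  linarith [hu.nonneg p.1, hu.gap_nonneg p.1 p.2]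

lemma isAdmissible_zero (r : ℝ) (F : X × E → ℝ≥0∞) : IsAdmissible r F (0 : Multiplier X E) where
  nonneg _ := le_rfl
  le _ := by simp
  growth := PhiR.const_mem 0
  gap_nonneg _ _ := by simp

lemma convex_setOfPred_isAdmissible (r : ℝ) (F : X × E → ℝ≥0∞) :
    Convex ℝ {u : Multiplier X E | IsAdmissible r F u} := by
  intro u hu v hv a b ha hb hab
  refine ⟨fun w => ?_, fun w => ?_, PhiR.add_mem (PhiR.smul_mem hu.growth a)
    (PhiR.smul_mem hv.growth b), fun w z => ?_⟩
  · exact add_nonneg (mul_nonneg ha (hu.nonneg w)) (mul_nonneg hb (hv.nonneg w))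
  · rcases eq_or_ne (F w) ⊤ with hF | hF
    · simp [hF]
    · rw [ENNReal.ofReal_le_iff_le_toReal hF]
      exact convex_Iic ((F w).toReal) ((ENNReal.ofReal_le_iff_le_toReal hF).1 (hu.le w))
        ((ENNReal.ofReal_le_iff_le_toReal hF).1 (hv.le w)) ha hb hab
  · have := add_nonneg (mul_nonneg ha (hu.gap_nonneg w z)) (mul_nonneg hb (hv.gap_nonneg w z))
    change 0 ≤ a * u.2.1 z + b * v.2.1 z + ⟪a • u.2.2 w + b • v.2.2 w, z - w.2⟫
    rw [inner_add_left, real_inner_smul_left, real_inner_smul_left]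
    linarith

lemma lagrangian_sum_smul {ι : Type*} [Fintype ι] {w : ι → ℝ} (hw : w ∈ stdSimplex ℝ ι)
    (u : ι → Multiplier X E) (p : (X × E) × E) :
    lagrangian r K (∑ i, w i • u i) p = ∑ i, w i * lagrangian r K (u i) p := by
  unfold lagrangian
  simp only [mul_add, Finset.sum_add_distrib, ← Finset.sum_mul, hw.2, one_mul, Prod.fst_sum,
    Prod.snd_sum, BoundedContinuousFunction.coe_sum, Finset.sum_apply, Prod.smul_fst, Prod.smul_snd,
    BoundedContinuousFunction.coe_smul, Pi.smul_apply, smul_eq_mul, sum_inner,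
    real_inner_smul_left]

end Multipliers

section ApproximateMinimisers

variable {X T : Type*}

lemma exists_simpleFunc_forall_le [MeasurableSpace X] {g : T → X → ℝ}
    (hg : ∀ t, Measurable (g t)) {s : Finset T} (hs : s.Nonempty) :
    ∃ τ : SimpleFunc X T, ∀ x, ∀ t ∈ s, g (τ x) x ≤ g t x := by
  induction hs using Finset.Nonempty.cons_induction with
  | singleton t => exact ⟨.const X t, by simp⟩
  | cons t s _ _ ih =>
    obtain ⟨τ, hτ⟩ := ih
    have hmeas : MeasurableSet {x | g t x < g (τ x) x} :=
      measurableSet_lt (hg t) (τ.measurable_bind g hg)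
    refine ⟨.piecewise _ hmeas (.const X t) τ, fun x t' ht' => ?_⟩
    rw [SimpleFunc.piecewise_apply]
    split_ifs with hlt
    · rcases Finset.mem_cons.1 ht' with rfl | ht'
      · rfl
      · exact (le_of_lt hlt).trans (hτ x t' ht')
    · rcases Finset.mem_cons.1 ht' with rfl | ht'
      · exact not_lt.1 hlt
      · exact hτ x t' ht'

lemma integrable_apply_simpleFunc [MeasurableSpace X] {μ : Measure X} {g : T → X → ℝ}
    (hg : ∀ t, Measurable (g t)) (hgi : ∀ t, Integrable (g t) μ) (τ : SimpleFunc X T) :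
    Integrable (fun x => g (τ x) x) μ := by
  refine (integrable_finsetSum τ.range fun t _ => (hgi t).norm).mono'
    (τ.measurable_bind g hg).aestronglyMeasurable (.of_forall fun x => ?_)
  exact Finset.single_le_sum (f := fun t => ‖g t x‖) (fun t _ => norm_nonneg _)
    (τ.mem_range_self x)

lemma le_integral_iInf_of_forall_simpleFunc [TopologicalSpace T] [TopologicalSpace.SeparableSpace T]
    [Nonempty T] [MeasurableSpace X] {μ : Measure X} {g : T → X → ℝ} (hg : ∀ t, Measurable (g t))
    (hgc : ∀ x, Continuous fun t => g t x) (hg0 : ∀ t x, 0 ≤ g t x)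
    (hgi : ∀ t, Integrable (g t) μ) {S : ℝ} (hS : ∀ τ : SimpleFunc X T, S ≤ ∫ x, g (τ x) x ∂μ) :
    S ≤ ∫ x, ⨅ t, g t x ∂μ := by
  classical
  set s := TopologicalSpace.denseSeq T
  choose τ hτ using fun k => exists_simpleFunc_forall_le hg
    ((Finset.nonempty_range_add_one (n := k)).image s)
  have hle : ∀ x {j k}, j ≤ k → g (τ k x) x ≤ g (s j) x := fun x j k hjk =>
    hτ k x (s j) (Finset.mem_image_of_mem s (Finset.mem_range.2 (Nat.lt_succ_of_le hjk)))
  have hbdd : ∀ x, BddBelow (range fun t => g t x) := fun x => ⟨0, forall_mem_range.2 (hg0 · x)⟩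
  have hlim : ∀ x, Tendsto (fun k => g (τ k x) x) atTop (𝓝 (⨅ t, g t x)) := fun x => by
    refine tendsto_order.2 ⟨fun a ha => .of_forall fun k => ha.trans_le (ciInf_le (hbdd x) _), ?_⟩
    intro a ha
    obtain ⟨t, ht⟩ := exists_lt_of_ciInf_lt ha
    obtain ⟨j, hj⟩ := (TopologicalSpace.denseRange_denseSeq T).exists_mem_open
      ((hgc x).isOpen_preimage _ isOpen_Iio) ⟨t, ht⟩
    filter_upwards [eventually_ge_atTop j] with k hk using (hle x hk).trans_lt hj
  refine ge_of_tendsto' (tendsto_integral_of_dominated_convergence (g (s 0))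
    (fun k => ((τ k).measurable_bind g hg).aestronglyMeasurable) (hgi _)
    (fun k => .of_forall fun x => ?_) (.of_forall hlim)) fun k => hS (τ k)
  rw [Real.norm_of_nonneg (hg0 _ _)]
  exact hle x k.zero_le

lemma continuous_iInf_of_isCompact [TopologicalSpace X] [TopologicalSpace T] {g : T → X → ℝ}
    (hg : Continuous fun p : X × T => g p.2 p.1) {k : Set T} (hk : IsCompact k) {t₀ : T}
    (ht₀ : t₀ ∈ k) (hgk : ∀ x, ∀ t ∉ k, g t₀ x ≤ g t x) : Continuous fun x => ⨅ t, g t x := by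
  have hinf : (fun x => ⨅ t, g t x) = fun x => sInf ((fun t => g t x) '' k) := by
    ext x
    have hgx : Continuous fun t => g t x := hg.comp (.prodMk_right x)
    obtain ⟨t₁, ht₁, hmin⟩ := hk.exists_isMinOn ⟨t₀, ht₀⟩ hgx.continuousOn
    have hmin' : ∀ t, g t₁ x ≤ g t x := fun t => by
      by_cases ht : t ∈ k
      · exact hmin ht
      · exact (hmin ht₀).trans (hgk x t ht)
    rw [IsLeast.csInf_eq (s := (fun t => g t x) '' k)
      ⟨mem_image_of_mem _ ht₁, by rintro _ ⟨t, -, rfl⟩; exact hmin' t⟩]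
    exact IsLeast.csInf_eq ⟨mem_range_self t₁, forall_mem_range.2 hmin'⟩
  rw [hinf]
  exact hk.continuous_sInf (f := fun x t => g t x) hg

end ApproximateMinimisers

section InfimaOfConcaveFunctions

lemma concaveOn_iInf {E ι : Type*} [AddCommGroup E] [Module ℝ E] [Nonempty ι] {s : Set E}
    {f : ι → E → ℝ} (hf : ∀ i, ConcaveOn ℝ s (f i))
    (hbdd : ∀ z ∈ s, BddBelow (range fun i => f i z)) : ConcaveOn ℝ s fun z => ⨅ i, f i z := by
  refine ⟨(hf (Classical.arbitrary ι)).1, fun y hy z hz a b ha hb hab => le_ciInf fun i => ?_⟩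
  exact (add_le_add (mul_le_mul_of_nonneg_left (ciInf_le (hbdd y hy) i) ha)
    (mul_le_mul_of_nonneg_left (ciInf_le (hbdd z hz) i) hb)).trans ((hf i).2 hy hz ha hb hab)

lemma concaveOn_const_add_inner {E : Type*} [NormedAddCommGroup E] [InnerProductSpace ℝ E]
    (c : ℝ) (g y : E) : ConcaveOn ℝ univ fun z => c + ⟪g, z - y⟫ := by
  simp_rw [inner_sub_right]
  exact (concaveOn_const c convex_univ).add
    (((innerₗ E g).concaveOn convex_univ).add_const (-⟪g, y⟫))

end InfimaOfConcaveFunctions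

section ReducedLagrangian

variable {X E : Type*} [TopologicalSpace X] [NormedAddCommGroup E] [InnerProductSpace ℝ E]
  {r K : ℝ} {F : X × E → ℝ≥0∞} {u : Multiplier X E}

/-- The Lagrangian minimised over the unconstrained variables `(y, z)`. -/
def reducedLagrangian (r K : ℝ) (u : Multiplier X E) (x : X) : ℝ :=
  ⨅ t : E × E, lagrangian r K u ((x, t.1), t.2)

lemma IsAdmissible.norm_le_lagrangian (hr : 1 ≤ r) (hK : 0 ≤ K) (hu : IsAdmissible r F u) (x : X)
    (t : E × E) : ‖t‖ ≤ lagrangian r K u ((x, t.1), t.2) := by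
  have hcoercive := (weight_add_weight_le_penalty hr hK ((x, t.1), t.2)).trans
    (hu.penalty_le_lagrangian _)
  have hr0 : 0 ≤ r := by linarith
  have hy := norm_le_weight hr t.1
  have hz := norm_le_weight hr t.2
  have hy1 := one_le_weight hr0 t.1
  have hz1 := one_le_weight hr0 t.2
  refine le_trans (max_le ?_ ?_) hcoercive <;> dsimp only <;> linarith

lemma exists_forall_lagrangian_le (r K : ℝ) (u : Multiplier X E) (t : E × E) :
    ∃ B, ∀ x, lagrangian r K u ((x, t.1), t.2) ≤ B := by
  refine ⟨‖u.1‖ + (weight r t.1 + weight r t.2 + (K + 1) * weightBregman r t.1 t.2) +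
    (u.2.1 t.2 + ‖u.2.2‖ * ‖t.2 - t.1‖), fun x => ?_⟩
  have hf : u.1 (x, t.1) ≤ ‖u.1‖ := u.1.apply_le_norm _
  have hh : ⟪u.2.2 (x, t.1), t.2 - t.1⟫ ≤ ‖u.2.2‖ * ‖t.2 - t.1‖ :=
    (real_inner_le_norm _ _).trans
      (mul_le_mul_of_nonneg_right (u.2.2.norm_coe_le_norm _) (norm_nonneg _))
  unfold lagrangian penalty
  linarith

lemma IsAdmissible.bddBelow_range_lagrangian (hr : 1 ≤ r) (hK : 0 ≤ K) (hu : IsAdmissible r F u)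
    (x : X) : BddBelow (range fun t : E × E => lagrangian r K u ((x, t.1), t.2)) :=
  ⟨0, forall_mem_range.2 fun t => (norm_nonneg t).trans (hu.norm_le_lagrangian hr hK x t)⟩

lemma IsAdmissible.reducedLagrangian_le (hr : 1 ≤ r) (hK : 0 ≤ K) (hu : IsAdmissible r F u)
    (x : X) (y z : E) : reducedLagrangian r K u x ≤ lagrangian r K u ((x, y), z) :=
  ciInf_le (hu.bddBelow_range_lagrangian hr hK x) (y, z)

lemma IsAdmissible.continuous_reducedLagrangian [ProperSpace E] (hr : 1 ≤ r) (hK : 0 ≤ K)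
    (hu : IsAdmissible r F u) : Continuous (reducedLagrangian r K u) := by
  obtain ⟨B, hB⟩ := exists_forall_lagrangian_le r K u (0 : E × E)
  refine continuous_iInf_of_isCompact (k := Metric.closedBall 0 (max B 0)) (t₀ := 0)
    (hu.continuous_lagrangian.comp (by fun_prop)) (isCompact_closedBall 0 _)
    (Metric.mem_closedBall_self (le_max_right B 0)) fun x t ht => ?_
  rw [mem_closedBall_zero_iff, not_le] at ht
  exact (hB x).trans (((le_max_left B 0).trans ht.le).trans (hu.norm_le_lagrangian hr hK x t))

lemma IsAdmissible.exists_abs_reducedLagrangian_le (hr : 1 ≤ r) (hK : 0 ≤ K)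
    (hu : IsAdmissible r F u) : ∃ B, ∀ x, |reducedLagrangian r K u x| ≤ B := by
  obtain ⟨B, hB⟩ := exists_forall_lagrangian_le r K u (0 : E × E)
  refine ⟨B, fun x => ?_⟩
  have hnonneg : 0 ≤ reducedLagrangian r K u x :=
    le_ciInf fun t => (norm_nonneg t).trans (hu.norm_le_lagrangian hr hK x t)
  rw [abs_of_nonneg hnonneg]
  exact (hu.reducedLagrangian_le hr hK x 0 0).trans (hB x)

lemma IsAdmissible.integrable_lagrangian_const [MeasurableSpace X] [OpensMeasurableSpace X]
    (μ : Measure X) [IsFiniteMeasure μ] (hr : 1 ≤ r) (hK : 0 ≤ K) (hu : IsAdmissible r F u)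
    (t : E × E) : Integrable (fun x => lagrangian r K u ((x, t.1), t.2)) μ := by
  obtain ⟨B, hB⟩ := exists_forall_lagrangian_le r K u t
  refine .of_bound (hu.continuous_lagrangian.comp (by fun_prop)).measurable.aestronglyMeasurable B
    (.of_forall fun x => ?_)
  rw [Real.norm_of_nonneg ((norm_nonneg t).trans (hu.norm_le_lagrangian hr hK x t))]
  exact hB x

lemma IsAdmissible.integrable_lagrangian_simpleFunc [MeasurableSpace X] [OpensMeasurableSpace X]
    (μ : Measure X) [IsFiniteMeasure μ] (hr : 1 ≤ r) (hK : 0 ≤ K) (hu : IsAdmissible r F u)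
    (τ : SimpleFunc X (E × E)) :
    Integrable (fun x => lagrangian r K u ((x, (τ x).1), (τ x).2)) μ :=
  integrable_apply_simpleFunc (g := fun t x => lagrangian r K u ((x, t.1), t.2))
    (fun _ => (hu.continuous_lagrangian.comp (by fun_prop)).measurable)
    (hu.integrable_lagrangian_const μ hr hK) τ

lemma IsAdmissible.le_integral_reducedLagrangian [SecondCountableTopology E]
    [MeasurableSpace X] [OpensMeasurableSpace X] {μ : Measure X} [IsFiniteMeasure μ]
    (hr : 1 ≤ r) (hK : 0 ≤ K) (hu : IsAdmissible r F u) {S : ℝ}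
    (hS : ∀ τ : SimpleFunc X (E × E), S ≤ ∫ x, lagrangian r K u ((x, (τ x).1), (τ x).2) ∂μ) :
    S ≤ ∫ x, reducedLagrangian r K u x ∂μ :=
  le_integral_iInf_of_forall_simpleFunc
    (fun _ => (hu.continuous_lagrangian.comp (by fun_prop)).measurable)
    (fun _ => hu.continuous_lagrangian.comp (by fun_prop))
    (fun t x => (norm_nonneg t).trans (hu.norm_le_lagrangian hr hK x t))
    (hu.integrable_lagrangian_const μ hr hK) hS

end ReducedLagrangian

section DualPotential

variable {X E : Type*} [TopologicalSpace X] [NormedAddCommGroup E] [InnerProductSpace ℝ E]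
  {r K : ℝ} {F : X × E → ℝ≥0∞} {u : Multiplier X E}

/-- The affine function of `z` with slope `h(w) - (K + 1) ∇⟨w₂⟩ ^ r` which makes the inequality
`R(x) + ψ(y) ≤ f(x, y) - K ⟨y⟩ ^ r` an equality at `w = (x, y)`, `z = y`, with `R` the reduced
Lagrangian of `u = (f, ψ', h)`. -/
def dualTangent (r K : ℝ) (u : Multiplier X E) (w : X × E) (z : E) : ℝ :=
  u.1 w - K * weight r w.2 - reducedLagrangian r K u w.1 +
    ⟪u.2.2 w - (K + 1) • weightGrad r w.2, z - w.2⟫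

/-- The concave potential generated by the multiplier `u`. -/
def dualPotential (r K : ℝ) (u : Multiplier X E) (z : E) : ℝ := ⨅ w, dualTangent r K u w z

lemma IsAdmissible.le_dualTangent (hr : 1 ≤ r) (hK : 0 ≤ K) (hu : IsAdmissible r F u)
    (w : X × E) (z : E) : -(K + 2) * weight r z - u.2.1 z ≤ dualTangent r K u w z := by
  have hR := hu.reducedLagrangian_le hr hK w.1 w.2 z
  simp only [lagrangian, penalty, weightBregman, Prod.mk.eta] at hR
  simp only [dualTangent, inner_sub_left, real_inner_smul_left]
  linarith

lemma IsAdmissible.le_dualPotential [Nonempty X] (hr : 1 ≤ r) (hK : 0 ≤ K)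
    (hu : IsAdmissible r F u) (z : E) :
    -(K + 2) * weight r z - u.2.1 z ≤ dualPotential r K u z :=
  le_ciInf fun w => hu.le_dualTangent hr hK w z

lemma IsAdmissible.bddBelow_range_dualTangent (hr : 1 ≤ r) (hK : 0 ≤ K) (hu : IsAdmissible r F u)
    (z : E) : BddBelow (range fun w => dualTangent r K u w z) :=
  ⟨_, forall_mem_range.2 fun w => hu.le_dualTangent hr hK w z⟩

lemma IsAdmissible.concaveOn_dualPotential [Nonempty X] (hr : 1 ≤ r) (hK : 0 ≤ K)
    (hu : IsAdmissible r F u) : ConcaveOn ℝ univ (dualPotential r K u) :=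
  concaveOn_iInf (fun _ => concaveOn_const_add_inner _ _ _)
    fun z _ => hu.bddBelow_range_dualTangent hr hK z

lemma IsAdmissible.dualPotential_mem [Nonempty X] [FiniteDimensional ℝ E] (hr : 1 ≤ r) (hK : 0 ≤ K)
    (hu : IsAdmissible r F u) : dualPotential r K u ∈ PhiR r (0 : E) := by
  have hcont : Continuous (dualPotential r K u) :=
    continuousOn_univ.1 ((hu.concaveOn_dualPotential hr hK).continuousOn isOpen_univ)
  have hlower := PhiR.add_mem (PhiR.smul_mem (PhiR.weight_mem (E := E) hr) (-(K + 2)))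
    (PhiR.smul_mem hu.growth (-1))
  refine PhiR.of_le_of_le hlower
    (PhiR.const_add_inner_mem hr _ _ _ : dualTangent r K u (Classical.arbitrary _) ∈ _) hcont
    (fun z => ?_) fun z => ciInf_le (hu.bddBelow_range_dualTangent hr hK z) _
  simpa only [Pi.add_apply, Pi.smul_apply, smul_eq_mul, neg_one_mul, ← sub_eq_add_neg] using
    hu.le_dualPotential hr hK z

lemma IsAdmissible.reducedLagrangian_add_dualPotential_le (hr : 1 ≤ r) (hK : 0 ≤ K)
    (hu : IsAdmissible r F u) (w : X × E) :
    reducedLagrangian r K u w.1 + dualPotential r K u w.2 ≤ u.1 w - K * weight r w.2 := by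
  have hle : dualPotential r K u w.2 ≤ dualTangent r K u w w.2 :=
    ciInf_le (hu.bddBelow_range_dualTangent hr hK w.2) w
  simp only [dualTangent, sub_self, inner_zero_right, add_zero] at hle
  linarith

end DualPotential

section DualAttainment

variable {X E : Type*} [PseudoMetricSpace X] [MeasurableSpace X] [OpensMeasurableSpace X]
  [NormedAddCommGroup E] [InnerProductSpace ℝ E] [FiniteDimensional ℝ E] [MeasurableSpace E]
  [OpensMeasurableSpace E] {r K : ℝ} {F : X × E → ℝ≥0∞}

lemma exists_potentials_of_le_integral_reducedLagrangian (hr : 1 ≤ r) (hK : 0 ≤ K) {x₀ : X}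
    {μ : Measure X} [IsProbabilityMeasure μ] (hμ : FinMom r x₀ μ) {ν : Measure E}
    [IsFiniteMeasure ν] (hν : FinMom r (0 : E) ν) {u : Multiplier X E} (hu : IsAdmissible r F u)
    {a : ℝ} (ha : a + K * (1 + ∫ x, dist x x₀ ^ r ∂μ) + (K + 2) * ∫ y, weight r y ∂ν +
      ∫ y, u.2.1 y ∂ν ≤ ∫ x, reducedLagrangian r K u x ∂μ) :
    ∃ φ ∈ PhiR r x₀, ∃ ψ ∈ PhiR r (0 : E), ConcaveOn ℝ univ ψ ∧
      (∀ x y, φ x + ψ y ≤ u.1 (x, y) - K * (1 + dist x x₀ ^ r + weight r y)) ∧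
      a ≤ ∫ x, φ x ∂μ + ∫ y, ψ y ∂ν := by
  have : Nonempty X := ⟨x₀⟩
  have hr0 : 0 ≤ r := by linarith
  obtain ⟨B, hB⟩ := hu.exists_abs_reducedLagrangian_le hr hK
  have hR : reducedLagrangian r K u ∈ PhiR r x₀ :=
    .of_bounded (hu.continuous_reducedLagrangian hr hK) hB
  have hdist : (fun x => 1 + dist x x₀ ^ r) ∈ PhiR r x₀ :=
    PhiR.add_mem (PhiR.const_mem 1) (PhiR.dist_rpow_mem hr0 x₀)
  have hψ := hu.dualPotential_mem hr hK
  have hweight := PhiR.integrable hr0 hν (PhiR.weight_mem hr)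
  have hgrowth := PhiR.integrable hr0 hν hu.growth
  refine ⟨_, PhiR.add_mem hR (PhiR.smul_mem hdist (-K)), _, hψ,
    hu.concaveOn_dualPotential hr hK, fun x y => ?_, ?_⟩
  · have := hu.reducedLagrangian_add_dualPotential_le hr hK (x, y)
    simp only [Pi.add_apply, Pi.smul_apply, smul_eq_mul]
    linarith
  · have hφ_integral : ∫ x, (reducedLagrangian r K u + -K • fun x => 1 + dist x x₀ ^ r) x ∂μ =
        ∫ x, reducedLagrangian r K u x ∂μ - K * (1 + ∫ x, dist x x₀ ^ r ∂μ) := by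
      simp only [Pi.add_apply, Pi.smul_apply, smul_eq_mul]
      rw [integral_add (PhiR.integrable hr0 hμ hR) ((PhiR.integrable hr0 hμ hdist).const_mul _),
        integral_const_mul, integral_add (integrable_const _)
          (PhiR.integrable hr0 hμ (PhiR.dist_rpow_mem hr0 x₀)), integral_const, probReal_univ]
      simp only [smul_eq_mul, one_mul]
      ring
    have hψ_integral : -(K + 2) * ∫ y, weight r y ∂ν - ∫ y, u.2.1 y ∂ν ≤
        ∫ y, dualPotential r K u y ∂ν := by
      rw [← integral_const_mul, ← integral_sub (hweight.const_mul _) hgrowth]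
      exact integral_mono ((hweight.const_mul _).sub hgrowth) (PhiR.integrable hr0 hν hψ)
        (hu.le_dualPotential hr hK)
    linarith

end DualAttainment

section LagrangianAlternative

variable {X E : Type*} [NormedAddCommGroup E] [InnerProductSpace ℝ E] [MeasurableSpace E]
  {r K : ℝ} {F : X × E → ℝ≥0∞}

/-- The measure `π` certifies the value `s`: no admissible multiplier raises its Lagrangian
`∫ lagrangian r K u ∂π - ∫ ψ ∂ν` above `s`. The lower integral is used because integrability under
`π` is a consequence. -/
def IsLagrangianLE [TopologicalSpace X] [MeasurableSpace X] (r K : ℝ) (F : X × E → ℝ≥0∞)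
    (ν : Measure E) (s : ℝ) (π : Measure ((X × E) × E)) : Prop :=
  ∀ u, IsAdmissible r F u →
    ∫⁻ p, ENNReal.ofReal (lagrangian r K u p) ∂π ≤ ENNReal.ofReal (s + ∫ y, u.2.1 y ∂ν)

lemma sum_mul_add_integral_multiplier [TopologicalSpace X] [BorelSpace E] {ι : Type*} [Fintype ι]
    {w : ι → ℝ} (hw : w ∈ stdSimplex ℝ ι) {ν : Measure E} [IsFiniteMeasure ν] (hr : 0 ≤ r)
    (hν : FinMom r (0 : E) ν) {u : ι → Multiplier X E} (hu : ∀ i, IsAdmissible r F (u i)) (s : ℝ) :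
    ∑ i, w i * (s + ∫ y, (u i).2.1 y ∂ν) = s + ∫ y, (∑ i, w i • u i).2.1 y ∂ν := by
  have hsum : ∀ y, (∑ i, w i • u i).2.1 y = ∑ i, w i * (u i).2.1 y := fun y => by
    simp only [Prod.fst_sum, Prod.snd_sum, Finset.sum_apply, Prod.smul_fst, Prod.smul_snd,
      Pi.smul_apply, smul_eq_mul]
  simp_rw [hsum]
  rw [integral_finsetSum _ fun i _ => (PhiR.integrable hr hν (hu i).growth).const_mul _]
  simp_rw [integral_const_mul, mul_add, Finset.sum_add_distrib, ← Finset.sum_mul, hw.2, one_mul]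

variable [MetricSpace X] [CompleteSpace X] [SecondCountableTopology X]
  [MeasurableSpace X] [BorelSpace X] [FiniteDimensional ℝ E] [BorelSpace E]

lemma exists_multiplier_forall_le_integral (hr : 1 ≤ r) (hK : 0 ≤ K) {μ : Measure X}
    [IsProbabilityMeasure μ] {ν : Measure E} [IsFiniteMeasure ν] (hν : FinMom r (0 : E) ν) {s : ℝ}
    (h : ∀ π : ProbabilityMeasure ((X × E) × E),
      (π : Measure ((X × E) × E)).map (fun p => p.1.1) = μ → ¬ IsLagrangianLE r K F ν s π) :
    ∃ u, IsAdmissible r F u ∧ ∀ π : ProbabilityMeasure ((X × E) × E),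
      (π : Measure ((X × E) × E)).map (fun p => p.1.1) = μ →
      (∀ v, IsAdmissible r F v → Integrable (lagrangian r K v) π) →
      s + ∫ y, u.2.1 y ∂ν ≤ ∫ p, lagrangian r K u p ∂π := by
  have hr0 : 0 ≤ r := by linarith
  have hcoercive : ∀ {u : Multiplier X E}, IsAdmissible r F u → ∀ p : (X × E) × E,
      weight r p.1.2 + weight r p.2 ≤ lagrangian r K u p := fun hu p =>
    (weight_add_weight_le_penalty hr hK p).trans (hu.penalty_le_lagrangian p)
  obtain ⟨t, w, hw, hle⟩ := exists_finset_stdSimplex_forall_integral_le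
    (I := {u : Multiplier X E // IsAdmissible r F u}) (G := fun u => lagrangian r K u.1)
    (s := fun u => s + ∫ y, u.1.2.1 y ∂ν) (fun u => u.2.continuous_lagrangian)
    (fun u p => by linarith [hcoercive u.2 p, one_le_weight hr0 p.1.2, one_le_weight hr0 p.2])
    (convex_setOfPred_map_eq (T := fun p : (X × E) × E => p.1.1) (by fun_prop) μ)
    (fun π hπ => ⟨by
      rw [← preimage_univ (f := fun p : (X × E) × E => p.1.1),
        ← Measure.map_apply (by fun_prop) .univ, hπ, measure_univ]⟩)
    (isCompact_setOfPred_map_eq_lintegral_weight_le μ hr ENNReal.ofReal_ne_top)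
    ⟨0, isAdmissible_zero r F⟩
    (fun π hπ hπM => by
      simp only [Prod.fst_zero, Prod.snd_zero, Pi.zero_apply, integral_zero, add_zero]
      exact (not_le.1 fun hVs => hπM ⟨hπ, hVs⟩).trans_le
        (lintegral_mono fun p => ENNReal.ofReal_le_ofReal (hcoercive (isAdmissible_zero r F) p)))
    (fun π hπ => by
      obtain ⟨u, hu⟩ := not_forall.1 (h π hπ.1)
      obtain ⟨hu, hlt⟩ := Classical.not_imp.1 hu
      exact ⟨⟨u, hu⟩, not_le.1 hlt⟩)
  refine ⟨∑ i, w i • i.1.1, (convex_setOfPred_isAdmissible r F).sum_mem (fun i _ => hw.1 i) hw.2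
    fun i _ => i.1.2, fun π hπ hint => ?_⟩
  rw [← sum_mul_add_integral_multiplier hw hr0 hν (fun i => i.1.2) s]
  simp_rw [lagrangian_sum_smul hw]
  rw [integral_finsetSum _ fun i _ => (hint _ i.1.2).const_mul _]
  simp_rw [integral_const_mul]
  exact hle π hπ fun i => hint _ i.1.2

lemma exists_isLagrangianLE_or_exists_multiplier (hr : 1 ≤ r) (hK : 0 ≤ K) (F : X × E → ℝ≥0∞)
    (μ : Measure X) [IsProbabilityMeasure μ] {ν : Measure E} [IsFiniteMeasure ν]
    (hν : FinMom r (0 : E) ν) (s : ℝ) :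
    (∃ π : ProbabilityMeasure ((X × E) × E), (π : Measure ((X × E) × E)).map (fun p => p.1.1) = μ ∧
      IsLagrangianLE r K F ν s π) ∨
    ∃ u, IsAdmissible r F u ∧ s + ∫ y, u.2.1 y ∂ν ≤ ∫ x, reducedLagrangian r K u x ∂μ := by
  by_contra! h
  obtain ⟨hplan, hmult⟩ := h
  obtain ⟨u, hu, hle⟩ := exists_multiplier_forall_le_integral hr hK hν hplan
  refine (hmult u hu).not_ge (hu.le_integral_reducedLagrangian hr hK fun τ => ?_)
  have hgraph : Measurable fun x => ((x, (τ x).1), (τ x).2) := by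
    have := τ.measurable
    fun_prop
  have hcont : ∀ {v}, IsAdmissible r F v → Continuous (lagrangian r K v) := fun hv =>
    hv.continuous_lagrangian
  rw [← integral_map hgraph.aemeasurable (hcont hu).aestronglyMeasurable]
  refine hle ⟨μ.map _, Measure.isProbabilityMeasure_map hgraph.aemeasurable⟩ ?_ fun v hv => ?_
  · rw [ProbabilityMeasure.coe_mk, Measure.map_map (by fun_prop) hgraph]
    exact Measure.map_id
  · exact (integrable_map_measure (hcont hv).aestronglyMeasurable hgraph.aemeasurable).2
      (hv.integrable_lagrangian_simpleFunc μ hr hK τ)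

end LagrangianAlternative

section BallCutoff

variable {E : Type*} [NormedAddCommGroup E]

/-- The piecewise linear cutoff that is `1` on the ball of radius `n` and `0` off the ball of radius
`n + 1`. -/
def ballCutoff (n : ℕ) (y : E) : ℝ := max 0 (min 1 (n + 1 - ‖y‖))

lemma ballCutoff_nonneg (n : ℕ) (y : E) : 0 ≤ ballCutoff n y := le_max_left _ _

lemma ballCutoff_le_one (n : ℕ) (y : E) : ballCutoff n y ≤ 1 := max_le zero_le_one (min_le_left _ _)

lemma ballCutoff_eq_zero {n : ℕ} {y : E} (hy : n + 1 < ‖y‖) : ballCutoff n y = 0 :=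
  max_eq_left ((min_le_right _ _).trans (by linarith))

lemma continuous_ballCutoff (n : ℕ) : Continuous (ballCutoff n : E → ℝ) := by
  unfold ballCutoff
  fun_prop

lemma tendsto_ballCutoff (y : E) : Tendsto (fun n => ballCutoff n y) atTop (𝓝 1) := by
  obtain ⟨N, hN⟩ := exists_nat_ge ‖y‖
  refine tendsto_const_nhds.congr' ?_
  filter_upwards [eventually_ge_atTop N] with n hn
  have hn' : (N : ℝ) ≤ n := Nat.cast_le.2 hn
  rw [ballCutoff, min_eq_left (by linarith), max_eq_right zero_le_one]

lemma norm_ballCutoff_smul_le {F : Type*} [SeminormedAddCommGroup F] [NormedSpace ℝ F]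
    (n : ℕ) (y : E) (v : F) : ‖ballCutoff n y • v‖ ≤ ‖v‖ := by
  rw [norm_smul, Real.norm_of_nonneg (ballCutoff_nonneg n y)]
  exact mul_le_of_le_one_left (norm_nonneg v) (ballCutoff_le_one n y)

end BallCutoff

lemma norm_apprSeq_smul_le {Y F : Type*} [TopologicalSpace Y] [HasOuterApproxClosed Y]
    [SeminormedAddCommGroup F] [NormedSpace ℝ F] {S : Set Y} (hS : IsClosed S) (n : ℕ) (y : Y)
    (v : F) : ‖(hS.apprSeq n y : ℝ) • v‖ ≤ ‖v‖ := by
  rw [norm_smul, Real.norm_of_nonneg (NNReal.coe_nonneg _)]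
  exact mul_le_of_le_one_left (norm_nonneg v)
    (by exact_mod_cast HasOuterApproxClosed.apprSeq_apply_le_one hS n y)

lemma integrable_nnreal_comp_fst {Y Z : Type*} [TopologicalSpace Y] [MeasurableSpace Y]
    [TopologicalSpace Z] [MeasurableSpace Z] [OpensMeasurableSpace (Y × Z)] (ρ : Measure (Y × Z))
    [IsFiniteMeasure ρ] (f : Y →ᵇ ℝ≥0) : Integrable (fun p => (f p.1 : ℝ)) ρ :=
  (f.compContinuous ⟨Prod.fst, continuous_fst⟩).integrable_of_nnreal ρ

namespace IsLagrangianLE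

variable {X E : Type*} [NormedAddCommGroup E] [InnerProductSpace ℝ E] [FiniteDimensional ℝ E]
  [MeasurableSpace E] [BorelSpace E] {r K s : ℝ} {F : X × E → ℝ≥0∞} {ν : Measure E}

section Integrability

variable [TopologicalSpace X] [MeasurableSpace X] [OpensMeasurableSpace X]
  {ρ : Measure ((X × E) × E)}

lemma integrable_lagrangian (H : IsLagrangianLE r K F ν s ρ) (hr : 1 ≤ r) (hK : 0 ≤ K)
    {u : Multiplier X E} (hu : IsAdmissible r F u) : Integrable (lagrangian r K u) ρ := by
  refine ⟨hu.continuous_lagrangian.aestronglyMeasurable, ?_⟩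
  rw [hasFiniteIntegral_iff_ofReal (Eventually.of_forall fun p => ?_)]
  · exact (H u hu).trans_lt ENNReal.ofReal_lt_top
  · have hr0 : 0 ≤ r := by linarith
    have := (weight_add_weight_le_penalty hr hK p).trans (hu.penalty_le_lagrangian p)
    exact (by linarith [one_le_weight hr0 p.1.2, one_le_weight hr0 p.2] : (0 : ℝ) ≤ _)

lemma integrable_penalty (H : IsLagrangianLE r K F ν s ρ) (hr : 1 ≤ r) (hK : 0 ≤ K) :
    Integrable (penalty r K) ρ := by
  convert H.integrable_lagrangian hr hK (isAdmissible_zero r F) using 1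
  ext p
  simp [lagrangian]

lemma integrable_weight_fst (H : IsLagrangianLE r K F ν s ρ) (hr : 1 ≤ r) (hK : 0 ≤ K) :
    Integrable (fun p => weight r p.1.2) ρ := by
  refine (H.integrable_penalty hr hK).mono'
    ((continuous_weight r).comp (by fun_prop)).aestronglyMeasurable
    (Eventually.of_forall fun p => ?_)
  have hr0 : 0 ≤ r := by linarith
  rw [Real.norm_of_nonneg (by linarith [one_le_weight hr0 p.1.2])]
  linarith [weight_add_weight_le_penalty hr hK p, one_le_weight hr0 p.2]

lemma integrable_weight_snd (H : IsLagrangianLE r K F ν s ρ) (hr : 1 ≤ r) (hK : 0 ≤ K) :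
    Integrable (fun p => weight r p.2) ρ := by
  refine (H.integrable_penalty hr hK).mono'
    ((continuous_weight r).comp (by fun_prop)).aestronglyMeasurable
    (Eventually.of_forall fun p => ?_)
  have hr0 : 0 ≤ r := by linarith
  rw [Real.norm_of_nonneg (by linarith [one_le_weight hr0 p.2])]
  linarith [weight_add_weight_le_penalty hr hK p, one_le_weight hr0 p.1.2]

lemma integrable_weightBregman (H : IsLagrangianLE r K F ν s ρ) (hr : 1 ≤ r) (hK : 0 ≤ K) :
    Integrable (fun p => weightBregman r p.1.2 p.2) ρ := by
  have hK1 : K + 1 ≠ 0 := by positivity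
  refine ((((H.integrable_penalty hr hK).sub (H.integrable_weight_fst hr hK)).sub
    (H.integrable_weight_snd hr hK)).const_mul (K + 1)⁻¹).congr (Eventually.of_forall fun p => ?_)
  simp only [Pi.sub_apply, penalty]
  field_simp
  ring

lemma integrable_sub (H : IsLagrangianLE r K F ν s ρ) (hr : 1 ≤ r) (hK : 0 ≤ K) :
    Integrable (fun p => p.2 - p.1.2) ρ := by
  refine ((H.integrable_weight_snd hr hK).add (H.integrable_weight_fst hr hK)).mono'
    (by fun_prop : Continuous fun p : (X × E) × E => p.2 - p.1.2).aestronglyMeasurable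
    (Eventually.of_forall fun p => (norm_sub_le _ _).trans ?_)
  exact add_le_add (norm_le_weight hr _) (norm_le_weight hr _)

end Integrability

section Marginals

variable [TopologicalSpace X] [MeasurableSpace X] [OpensMeasurableSpace X]
  {ρ : Measure ((X × E) × E)} [IsProbabilityMeasure ρ]

lemma integral_lagrangian_le (H : IsLagrangianLE r K F ν s ρ) (hr : 1 ≤ r) (hK : 0 ≤ K)
    {u : Multiplier X E} (hu : IsAdmissible r F u) :
    ∫ p, lagrangian r K u p ∂ρ ≤ s + ∫ y, u.2.1 y ∂ν := by
  have hr0 : 0 ≤ r := by linarith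
  have hint := H.integrable_lagrangian hr hK hu
  have hone : ∀ p, 1 ≤ lagrangian r K u p := fun p => by
    linarith [(weight_add_weight_le_penalty hr hK p).trans (hu.penalty_le_lagrangian p),
      one_le_weight hr0 p.1.2, one_le_weight hr0 p.2]
  have hpos : 1 ≤ ∫ p, lagrangian r K u p ∂ρ := by
    simpa using integral_mono (integrable_const (1 : ℝ)) hint hone
  have hle := H u hu
  rw [← ofReal_integral_eq_lintegral_ofReal hint
    (Eventually.of_forall fun p => zero_le_one.trans (hone p))] at hle
  rcases ENNReal.ofReal_le_ofReal_iff'.1 hle with h | h <;> linarith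

lemma integrable_gap_and_integral_gap_le (H : IsLagrangianLE r K F ν s ρ) (hr : 1 ≤ r) (hK : 0 ≤ K)
    {ψ : E → ℝ} {h : X × E →ᵇ E} (hψ : ψ ∈ PhiR r (0 : E))
    (hgap : ∀ w z, 0 ≤ ψ z + ⟪h w, z - w.2⟫) :
    Integrable (fun p => ψ p.2 + ⟪h p.1, p.2 - p.1.2⟫) ρ ∧
      ∫ p, (ψ p.2 + ⟪h p.1, p.2 - p.1.2⟫) ∂ρ ≤ ∫ y, ψ y ∂ν := by
  have hadm : ∀ t : ℝ, 0 ≤ t → IsAdmissible r F ((0, t • ψ, t • h) : Multiplier X E) :=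
    fun t ht => ⟨fun _ => le_rfl, fun _ => by simp, PhiR.smul_mem hψ t, fun w z => by
      have := mul_nonneg ht (hgap w z)
      simpa [real_inner_smul_left, mul_add] using this⟩
  have hlagrangian : ∀ t : ℝ, lagrangian r K ((0, t • ψ, t • h) : Multiplier X E) =
      fun p => penalty r K p + t * (ψ p.2 + ⟪h p.1, p.2 - p.1.2⟫) := fun t => by
    ext p
    simp [lagrangian, real_inner_smul_left, mul_add]
  have hpenalty := H.integrable_penalty hr hK
  have hint : Integrable (fun p => ψ p.2 + ⟪h p.1, p.2 - p.1.2⟫) ρ := by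
    have hsum := H.integrable_lagrangian hr hK (hadm 1 zero_le_one)
    simp_rw [hlagrangian, one_mul] at hsum
    exact (integrable_add_iff_integrable_right hpenalty).1 hsum
  refine ⟨hint, ?_⟩
  have hscaled : ∀ t : ℝ, 0 ≤ t → t * (∫ p, (ψ p.2 + ⟪h p.1, p.2 - p.1.2⟫) ∂ρ - ∫ y, ψ y ∂ν)
      ≤ s - ∫ p, penalty r K p ∂ρ := fun t ht => by
    have := H.integral_lagrangian_le hr hK (hadm t ht)
    rw [hlagrangian, integral_add hpenalty (hint.const_mul t), integral_const_mul] at this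
    simp only [Pi.smul_apply, smul_eq_mul, integral_const_mul] at this
    linarith
  by_contra! hlt
  obtain ⟨t, ht⟩ := exists_nat_gt ((s - ∫ p, penalty r K p ∂ρ) /
    (∫ p, (ψ p.2 + ⟪h p.1, p.2 - p.1.2⟫) ∂ρ - ∫ y, ψ y ∂ν))
  exact (hscaled t t.cast_nonneg).not_gt ((div_lt_iff₀ (sub_pos.2 hlt)).1 ht)

lemma map_snd_eq [IsProbabilityMeasure ν] (H : IsLagrangianLE r K F ν s ρ) (hr : 1 ≤ r)
    (hK : 0 ≤ K) : ρ.map Prod.snd = ν := by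
  have hsnd : AEMeasurable (Prod.snd : (X × E) × E → E) ρ := measurable_snd.aemeasurable
  have := Measure.isProbabilityMeasure_map hsnd
  have hle : ∀ f : E →ᵇ ℝ, ∫ z, f z ∂ρ.map Prod.snd ≤ ∫ z, f z ∂ν := fun f => by
    have hcont : Continuous fun z => f z + ‖f‖ := by fun_prop
    have hshift := (H.integrable_gap_and_integral_gap_le hr hK (ψ := fun z => f z + ‖f‖) (h := 0)
      (PhiR.of_bounded hcont (f + BoundedContinuousFunction.const E ‖f‖).norm_coe_le_norm)
      fun _ z => by
        simpa using neg_le_iff_add_nonneg.1 (neg_le_of_abs_le (f.norm_coe_le_norm z))).2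
    simp only [BoundedContinuousFunction.coe_zero, Pi.zero_apply, inner_zero_left, add_zero]
      at hshift
    rw [← integral_map (f := fun z => f z + ‖f‖) hsnd hcont.aestronglyMeasurable] at hshift
    simpa [integral_add (f.integrable _) (integrable_const _)] using hshift
  refine ext_of_forall_integral_eq_of_IsFiniteMeasure fun f => le_antisymm (hle f) ?_
  simpa [integral_neg] using hle (-f)

lemma integral_snd_eq [IsProbabilityMeasure ν] (H : IsLagrangianLE r K F ν s ρ) (hr : 1 ≤ r)
    (hK : 0 ≤ K) {g : E → ℝ} (hg : Continuous g) : ∫ p, g p.2 ∂ρ = ∫ z, g z ∂ν := by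
  rw [← H.map_snd_eq hr hK, integral_map measurable_snd.aemeasurable hg.aestronglyMeasurable]

end Marginals

section Martingale

variable [TopologicalSpace X] [MeasurableSpace X] [OpensMeasurableSpace X] [IsProbabilityMeasure ν]
  {ρ : Measure ((X × E) × E)} [IsProbabilityMeasure ρ]

lemma integral_inner_sub_nonpos (H : IsLagrangianLE r K F ν s ρ) (hr : 1 ≤ r) (hK : 0 ≤ K)
    (hν : FinMom r (0 : E) ν) (h : X × E →ᵇ E) {R : ℝ} (hR : 0 ≤ R)
    (hsupp : ∀ w, R < ‖w.2‖ → h w = 0) : ∫ p, ⟪h p.1, p.2 - p.1.2⟫ ∂ρ ≤ 0 := by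
  set ψ : E → ℝ := ‖h‖ • ((fun _ => R) + fun z => ‖z‖)
  have hψ : ψ ∈ PhiR r (0 : E) :=
    PhiR.smul_mem (PhiR.add_mem (PhiR.const_mem R) (PhiR.norm_mem hr)) ‖h‖
  have hgap : ∀ w z, 0 ≤ ψ z + ⟪h w, z - w.2⟫ := fun w z => by
    rcases lt_or_ge R ‖w.2‖ with hw | hw
    · rw [hsupp w hw, inner_zero_left, add_zero]
      exact mul_nonneg (norm_nonneg h) (add_nonneg hR (norm_nonneg z))
    · have hbound : ‖h w‖ * ‖z - w.2‖ ≤ ‖h‖ * (R + ‖z‖) :=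
        mul_le_mul (h.norm_coe_le_norm w) (by linarith [norm_sub_le z w.2]) (norm_nonneg _)
          (norm_nonneg _)
      have := neg_le_of_abs_le ((abs_real_inner_le_norm (h w) (z - w.2)).trans hbound)
      exact neg_le_iff_add_nonneg'.1 this
  have hψρ : Integrable (fun p : (X × E) × E => ψ p.2) ρ := by
    have := PhiR.integrable (by linarith) hν hψ
    rw [← H.map_snd_eq hr hK] at this
    exact this.comp_measurable measurable_snd
  obtain ⟨hint, hle⟩ := H.integrable_gap_and_integral_gap_le hr hK hψ hgap
  rw [integral_add hψρ ((integrable_add_iff_integrable_right hψρ).1 hint),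
    H.integral_snd_eq hr hK hψ.1] at hle
  linarith

lemma integral_inner_sub_nonpos_of_locally_bounded (H : IsLagrangianLE r K F ν s ρ) (hr : 1 ≤ r)
    (hK : 0 ≤ K) (hν : FinMom r (0 : E) ν) {h : X × E → E} (hc : Continuous h)
    (hb : ∀ R, ∃ B, ∀ w, ‖w.2‖ ≤ R → ‖h w‖ ≤ B)
    (hint : Integrable (fun p => ⟪h p.1, p.2 - p.1.2⟫) ρ) :
    ∫ p, ⟪h p.1, p.2 - p.1.2⟫ ∂ρ ≤ 0 := by
  have hcut : ∀ n, Continuous fun w : X × E => ballCutoff n w.2 • h w := fun n =>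
    ((continuous_ballCutoff n).comp continuous_snd).smul hc
  refine le_of_tendsto' (f := fun n => ∫ p, ⟪ballCutoff n p.1.2 • h p.1, p.2 - p.1.2⟫ ∂ρ)
    (tendsto_integral_of_dominated_convergence (fun p => ‖⟪h p.1, p.2 - p.1.2⟫‖)
      (fun n => ?_) hint.norm (fun n => Eventually.of_forall fun p => ?_)
      (Eventually.of_forall fun p => ?_)) fun n => ?_
  · exact (((hcut n).comp continuous_fst).inner
      (continuous_snd.sub (continuous_snd.comp continuous_fst))).aestronglyMeasurable
  · rw [real_inner_smul_left]
    exact norm_ballCutoff_smul_le n _ _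
  · simp_rw [real_inner_smul_left]
    simpa using (tendsto_ballCutoff p.1.2).mul_const ⟪h p.1, p.2 - p.1.2⟫
  · obtain ⟨B, hB⟩ := hb (n + 1)
    have hzero : ∀ w : X × E, n + 1 < ‖w.2‖ → ballCutoff n w.2 • h w = 0 := fun w hw => by
      rw [ballCutoff_eq_zero hw, zero_smul]
    refine H.integral_inner_sub_nonpos hr hK hν
      (.ofNormedAddCommGroup (fun w => ballCutoff n w.2 • h w) (hcut n) (max B 0) fun w => ?_)
      (by positivity) hzero
    rcases lt_or_ge (n + 1 : ℝ) ‖w.2‖ with hw | hw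
    · simp [hzero w hw]
    · exact (norm_ballCutoff_smul_le n _ _).trans ((hB w hw).trans (le_max_left _ _))

lemma integral_inner_sub_eq_zero (H : IsLagrangianLE r K F ν s ρ) (hr : 1 ≤ r) (hK : 0 ≤ K)
    (hν : FinMom r (0 : E) ν) {h : X × E → E} (hc : Continuous h)
    (hb : ∀ R, ∃ B, ∀ w, ‖w.2‖ ≤ R → ‖h w‖ ≤ B)
    (hint : Integrable (fun p => ⟪h p.1, p.2 - p.1.2⟫) ρ) :
    ∫ p, ⟪h p.1, p.2 - p.1.2⟫ ∂ρ = 0 := by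
  refine le_antisymm (H.integral_inner_sub_nonpos_of_locally_bounded hr hK hν hc hb hint) ?_
  simpa [integral_neg] using H.integral_inner_sub_nonpos_of_locally_bounded hr hK hν hc.neg
    (by simpa using hb) (by simpa using hint.neg)

lemma integral_weightBregman (H : IsLagrangianLE r K F ν s ρ) (hr : 1 ≤ r) (hK : 0 ≤ K)
    (hν : FinMom r (0 : E) ν) :
    ∫ p, weightBregman r p.1.2 p.2 ∂ρ = ∫ z, weight r z ∂ν - ∫ p, weight r p.1.2 ∂ρ := by
  have hfst := H.integrable_weight_fst hr hK
  have hsnd := H.integrable_weight_snd hr hK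
  have hgrad : Integrable (fun p => ⟪weightGrad r p.1.2, p.2 - p.1.2⟫) ρ := by
    refine ((hsnd.sub hfst).sub (H.integrable_weightBregman hr hK)).congr (.of_forall fun p => ?_)
    simp [weightBregman]
  have hmartingale := H.integral_inner_sub_eq_zero hr hK hν
    (h := fun w => weightGrad r w.2) ((continuous_weightGrad r).comp continuous_snd)
    (fun R => by
      have := FiniteDimensional.proper_real E
      obtain ⟨B, hB⟩ := ((isCompact_closedBall (0 : E) R).image
        (continuous_weightGrad r)).isBounded.exists_norm_le
      exact ⟨B, fun w hw => hB _ ⟨w.2, by simpa using hw, rfl⟩⟩) hgrad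
  have hdiff : Integrable (fun p => weight r p.2 - weight r p.1.2) ρ := hsnd.sub hfst
  calc ∫ p, weightBregman r p.1.2 p.2 ∂ρ
      = ∫ p, (weight r p.2 - weight r p.1.2) ∂ρ
          - ∫ p, ⟪weightGrad r p.1.2, p.2 - p.1.2⟫ ∂ρ := integral_sub hdiff hgrad
    _ = ∫ z, weight r z ∂ν - ∫ p, weight r p.1.2 ∂ρ := by
        rw [hmartingale, sub_zero, integral_sub hsnd hfst,
          H.integral_snd_eq hr hK (continuous_weight r)]

lemma integral_penalty (H : IsLagrangianLE r K F ν s ρ) (hr : 1 ≤ r) (hK : 0 ≤ K)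
    (hν : FinMom r (0 : E) ν) :
    ∫ p, penalty r K p ∂ρ = (K + 2) * ∫ z, weight r z ∂ν - K * ∫ p, weight r p.1.2 ∂ρ := by
  have hfst := H.integrable_weight_fst hr hK
  have hsnd := H.integrable_weight_snd hr hK
  unfold penalty
  rw [integral_add (hfst.fun_add hsnd) ((H.integrable_weightBregman hr hK).const_mul _),
    integral_add hfst hsnd, integral_const_mul, H.integral_weightBregman hr hK hν,
    H.integral_snd_eq hr hK (continuous_weight r)]
  ring

lemma integral_boundedContinuousFunction_le (H : IsLagrangianLE r K F ν s ρ) (hr : 1 ≤ r)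
    (hK : 0 ≤ K) (hν : FinMom r (0 : E) ν) {f : X × E →ᵇ ℝ≥0} (hf : ∀ w, (f w : ℝ≥0∞) ≤ F w) :
    ∫ p, (f p.1 : ℝ) ∂ρ ≤
      s - (K + 2) * ∫ z, weight r z ∂ν + K * ∫ p, weight r p.1.2 ∂ρ := by
  have hadm : IsAdmissible r F
      ((f.comp _ NNReal.isometry_coe.lipschitz, 0, 0) : Multiplier X E) :=
    ⟨fun w => (f w).coe_nonneg, fun w => (ENNReal.ofReal_coe_nnreal).trans_le (hf w),
      PhiR.const_mem 0, by simp⟩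
  have hle := H.integral_lagrangian_le hr hK hadm
  simp only [lagrangian, BoundedContinuousFunction.comp_apply, Pi.zero_apply,
    BoundedContinuousFunction.coe_zero, inner_zero_left, add_zero, integral_zero] at hle
  rw [integral_add (integrable_nnreal_comp_fst ρ f) (H.integrable_penalty hr hK),
    H.integral_penalty hr hK hν] at hle
  linarith

end Martingale

section Conclusions

variable [PseudoMetricSpace X] [MeasurableSpace X] [IsProbabilityMeasure ν]
  {ρ : Measure ((X × E) × E)} [IsProbabilityMeasure ρ]

lemma lintegral_cost_le [OpensMeasurableSpace X] (H : IsLagrangianLE r K F ν s ρ) (hr : 1 ≤ r)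
    (hK : 0 ≤ K) (hν : FinMom r (0 : E) ν) (hF : LowerSemicontinuous F) :
    ∫⁻ p, F p.1 ∂ρ ≤ ENNReal.ofReal
      (s - (K + 2) * ∫ z, weight r z ∂ν + K * ∫ p, weight r p.1.2 ∂ρ) := by
  obtain ⟨f, hf, hfF⟩ := exists_seq_boundedContinuousFunction_iSup_eq hF
  have hle : ∀ n w, (f n w : ℝ≥0∞) ≤ F w := fun n w =>
    (le_iSup (fun n => (f n w : ℝ≥0∞)) n).trans (hfF w).le
  have hcomp : ∀ n, Continuous fun p : (X × E) × E => f n p.1 := fun n =>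
    (f n).continuous.comp continuous_fst
  simp_rw [← hfF]
  rw [lintegral_iSup (fun n => (hcomp n).measurable.coe_nnreal_ennreal)
    fun n m hnm p => ENNReal.coe_le_coe.2 (hf p.1 hnm)]
  refine iSup_le fun n => ?_
  rw [lintegral_coe_eq_integral _ (integrable_nnreal_comp_fst ρ (f n))]
  exact ENNReal.ofReal_le_ofReal (H.integral_boundedContinuousFunction_le hr hK hν (hle n))

lemma setIntegral_sub_eq_zero [OpensMeasurableSpace X] (H : IsLagrangianLE r K F ν s ρ) (hr : 1 ≤ r)
    (hK : 0 ≤ K) (hν : FinMom r (0 : E) ν) {S : Set (X × E)} (hS : IsClosed S) :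
    ∫ p in Prod.fst ⁻¹' S, (p.2 - p.1.2) ∂ρ = 0 := by
  have hmeas : MeasurableSet (Prod.fst ⁻¹' S : Set ((X × E) × E)) :=
    (hS.preimage continuous_fst).measurableSet
  have hsub := H.integrable_sub hr hK
  refine ext_inner_left ℝ fun e => ?_
  have hin : Integrable (fun p => ⟪e, p.2 - p.1.2⟫) ρ := hsub.const_inner e
  have hcont : ∀ n, Continuous fun w => (hS.apprSeq n w : ℝ) • e := fun n => by fun_prop
  have hstrong : ∀ n,
      AEStronglyMeasurable (fun p => ⟪(hS.apprSeq n p.1 : ℝ) • e, p.2 - p.1.2⟫) ρ := fun n =>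
    (((hcont n).comp continuous_fst).inner
      (continuous_snd.sub (continuous_snd.comp continuous_fst))).aestronglyMeasurable
  have hbound : ∀ n (p : (X × E) × E),
      ‖⟪(hS.apprSeq n p.1 : ℝ) • e, p.2 - p.1.2⟫‖ ≤ ‖⟪e, p.2 - p.1.2⟫‖ := fun n p => by
    rw [real_inner_smul_left]
    exact norm_apprSeq_smul_le hS n p.1 _
  have htendsto : Tendsto (fun n => ∫ p, ⟪(hS.apprSeq n p.1 : ℝ) • e, p.2 - p.1.2⟫ ∂ρ) atTop
      (𝓝 (∫ p, (Prod.fst ⁻¹' S).indicator (fun p => ⟪e, p.2 - p.1.2⟫) p ∂ρ)) := by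
    refine tendsto_integral_of_dominated_convergence (fun p => ‖⟪e, p.2 - p.1.2⟫‖) hstrong
      hin.norm (fun n => .of_forall (hbound n)) (.of_forall fun p => ?_)
    have happr := NNReal.tendsto_coe.2
      (tendsto_pi_nhds.1 (HasOuterApproxClosed.tendsto_apprSeq hS) p.1)
    simp_rw [real_inner_smul_left]
    by_cases hp : p.1 ∈ S <;> simpa [indicator, hp] using happr.mul_const ⟪e, p.2 - p.1.2⟫
  have hzero : ∀ n, ∫ p, ⟪(hS.apprSeq n p.1 : ℝ) • e, p.2 - p.1.2⟫ ∂ρ = 0 := fun n =>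
    H.integral_inner_sub_eq_zero hr hK hν (hcont n)
      (fun _ => ⟨‖e‖, fun w _ => norm_apprSeq_smul_le hS n w e⟩)
      (hin.norm.mono' (hstrong n) (.of_forall (hbound n)))
  rw [← integral_inner hsub.integrableOn e, inner_zero_right, ← integral_indicator hmeas]
  exact tendsto_nhds_unique htendsto (by simp_rw [hzero]; exact tendsto_const_nhds)

end Conclusions

end IsLagrangianLE

section Intensity

open ProbabilityTheory

variable {X Y : Type*} [MeasurableSpace X] [MeasurableSpace Y]

/-- The kernel sending a probability measure on `Y` to itself. It is zero on all other measures,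
which makes it a finite kernel. -/
def samplingKernel (Y : Type*) [MeasurableSpace Y] : Kernel (Measure Y) Y where
  toFun p := if p univ = 1 then p else 0
  measurable' := by
    classical
    exact Measurable.ite (Measure.measurable_coe .univ (measurableSet_singleton 1))
      measurable_id measurable_const

lemma samplingKernel_apply (p : Measure Y) [IsProbabilityMeasure p] : samplingKernel Y p = p :=
  if_pos measure_univ

instance isFiniteKernel_samplingKernel : IsFiniteKernel (samplingKernel Y) := by
  refine ⟨⟨1, ENNReal.one_lt_top, fun p => ?_⟩⟩
  change (if p univ = 1 then p else 0) univ ≤ 1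
  split_ifs with h
  · exact h.le
  · simp

variable {P : Measure (X × Measure Y)}

lemma intensityHat_eq_map_compProd [SFinite P] (hP : ∀ᵐ xp ∂P, IsProbabilityMeasure xp.2) :
    intensityHat P = (P ⊗ₘ (samplingKernel Y).prodMkLeft X).map (fun q => (q.1.1, q.2)) := by
  have hdirac : (fun xp : X × Measure Y => (Measure.dirac xp.1).prod xp.2) =ᵐ[P]
      Kernel.deterministic Prod.fst measurable_fst ×ₖ (samplingKernel Y).prodMkLeft X := by
    filter_upwards [hP] with xp hxp
    rw [Kernel.prod_apply, Kernel.deterministic_apply, Kernel.prodMkLeft_apply,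
      samplingKernel_apply]
  ext s hs
  have hm : Measurable fun q : (X × Measure Y) × Y => (q.1.1, q.2) := by fun_prop
  rw [intensityHat, Measure.bind_congr_right hdirac, Measure.bind_apply hs (Kernel.aemeasurable _),
    Measure.map_apply hm hs, Measure.compProd_apply (hm hs)]
  refine lintegral_congr fun xp => ?_
  rw [Kernel.prod_apply' _ _ _ hs, Kernel.deterministic_apply, lintegral_dirac']
  · rfl
  · exact measurable_measure_prodMk_left hs

variable {μ : Measure X} {ν : Measure Y}

lemma fst_compProd_samplingKernel [SFinite P] (hP : ∀ᵐ xp ∂P, IsProbabilityMeasure xp.2) :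
    (P ⊗ₘ (samplingKernel Y).prodMkLeft X).fst = P := by
  ext s hs
  have hmass : ∀ᵐ xp ∂P.restrict s, (samplingKernel Y).prodMkLeft X xp univ = 1 := by
    filter_upwards [ae_restrict_of_ae hP] with xp hxp
    rw [Kernel.prodMkLeft_apply, samplingKernel_apply, measure_univ]
  rw [Measure.fst_apply hs, ← prod_univ, Measure.compProd_apply_prod hs .univ,
    lintegral_congr_ae hmass, setLIntegral_one]

lemma Lambda.map_fst (hP : P ∈ Lambda μ ν) : P.map Prod.fst = μ := by
  obtain ⟨_, hprob, hfst, -⟩ := hP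
  rw [intensityHat_eq_map_compProd hprob, Measure.map_map measurable_fst (by fun_prop)] at hfst
  rw [← hfst, ← fst_compProd_samplingKernel hprob, Measure.fst,
    Measure.map_map measurable_fst measurable_fst, ← Measure.fst,
    fst_compProd_samplingKernel hprob]
  rfl

lemma Lambda.map_snd (hP : P ∈ Lambda μ ν) :
    (P ⊗ₘ (samplingKernel Y).prodMkLeft X).map Prod.snd = ν := by
  obtain ⟨_, hprob, -, hsnd⟩ := hP
  rwa [intensityHat_eq_map_compProd hprob, Measure.map_map measurable_snd (by fun_prop)] at hsnd

lemma Lambda.lintegral_lintegral (hP : P ∈ Lambda μ ν) {f : Y → ℝ≥0∞} (hf : Measurable f) :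
    ∫⁻ xp, ∫⁻ y, f y ∂xp.2 ∂P = ∫⁻ y, f y ∂ν := by
  have := hP.1
  rw [← Lambda.map_snd hP, lintegral_map hf measurable_snd,
    Measure.lintegral_compProd (f := fun q => f q.2) (hf.comp measurable_snd)]
  refine lintegral_congr_ae ?_
  filter_upwards [hP.2.1] with xp hxp
  rw [Kernel.prodMkLeft_apply, samplingKernel_apply]

lemma Lambda.integrable_integral_and_integral_integral (hP : P ∈ Lambda μ ν) {ψ : Y → ℝ}
    (hψ : Integrable ψ ν) :
    Integrable (fun xp => ∫ y, ψ y ∂xp.2) P ∧ ∫ xp, ∫ y, ψ y ∂xp.2 ∂P = ∫ y, ψ y ∂ν := by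
  have := hP.1
  have hκ : (fun xp => ∫ y, ψ y ∂(samplingKernel Y).prodMkLeft X xp)
      =ᵐ[P] fun xp => ∫ y, ψ y ∂xp.2 := by
    filter_upwards [hP.2.1] with xp hxp
    rw [Kernel.prodMkLeft_apply, samplingKernel_apply]
  rw [← Lambda.map_snd hP] at hψ ⊢
  have hint : Integrable (fun q => ψ q.2) (P ⊗ₘ (samplingKernel Y).prodMkLeft X) :=
    hψ.comp_measurable measurable_snd
  refine ⟨hint.integral_compProd.congr hκ, ?_⟩
  rw [← integral_congr_ae hκ, ← Measure.integral_compProd hint,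
    integral_map measurable_snd.aemeasurable hψ.1]

lemma Lambda.ae_mem_Pr [PseudoMetricSpace Y] [OpensMeasurableSpace Y] {r : ℝ}
    {y₀ : Y} (hν : FinMom r y₀ ν) (hP : P ∈ Lambda μ ν) :
    ∀ᵐ xp ∂P, xp.2 ∈ Pr r y₀ := by
  have hdist : Measurable fun y => ENNReal.ofReal (dist y y₀ ^ r) := by fun_prop
  have hmoment : Measurable fun xp : X × Measure Y => ∫⁻ y, ENNReal.ofReal (dist y y₀ ^ r) ∂xp.2 :=
    (Measure.measurable_lintegral hdist).comp measurable_snd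
  filter_upwards [hP.2.1, ae_lt_top hmoment ((Lambda.lintegral_lintegral hP hdist).trans_ne hν.ne)]
    with xp hprob hfin using ⟨hprob, hfin⟩

end Intensity

section Disintegration

open ProbabilityTheory

variable {X W Y : Type*} [MeasurableSpace X] [MeasurableSpace W] [MeasurableSpace Y]
  [StandardBorelSpace Y] [Nonempty Y] {ρ : Measure ((X × W) × Y)}

/-- The law of `(x, κ (x, w))`, where `κ` is the conditional distribution of the last coordinate
given the first two. -/
def condPlan (ρ : Measure ((X × W) × Y)) [IsFiniteMeasure ρ] : Measure (X × Measure Y) :=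
  ρ.fst.map fun w => (w.1, ρ.condKernel w)

lemma measurable_fst_condKernel [IsFiniteMeasure ρ] :
    Measurable fun w : X × W => (w.1, ρ.condKernel w) :=
  measurable_fst.prodMk ρ.condKernel.measurable

lemma ae_isProbabilityMeasure_condPlan [IsFiniteMeasure ρ] :
    ∀ᵐ xp ∂condPlan ρ, IsProbabilityMeasure xp.2 := by
  have hone : ∀ᵐ xp ∂condPlan ρ, xp.2 univ = 1 := by
    have hmeas : MeasurableSet {xp : X × Measure Y | xp.2 univ = 1} :=
      measurable_snd (Measure.measurable_coe .univ (measurableSet_singleton 1))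
    rw [condPlan, ae_map_iff measurable_fst_condKernel.aemeasurable hmeas]
    exact .of_forall fun w => measure_univ
  filter_upwards [hone] with xp hxp using ⟨hxp⟩

lemma intensityHat_condPlan [IsFiniteMeasure ρ] :
    intensityHat (condPlan ρ) = ρ.map fun p => (p.1.1, p.2) := by
  have : IsFiniteMeasure (condPlan ρ) := Measure.isFiniteMeasure_map _ _
  ext s hs
  have hX : Measurable fun q : (X × Measure Y) × Y => (q.1.1, q.2) := by fun_prop
  have hW : Measurable fun q : (X × W) × Y => (q.1.1, q.2) := by fun_prop
  rw [intensityHat_eq_map_compProd ae_isProbabilityMeasure_condPlan, Measure.map_apply hX hs,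
    Measure.map_apply hW hs, Measure.compProd_apply (hX hs), condPlan,
    lintegral_map (Kernel.measurable_kernel_prodMk_left (hX hs)) measurable_fst_condKernel]
  conv_rhs => rw [← ρ.disintegrate ρ.condKernel, Measure.compProd_apply (hW hs)]
  refine lintegral_congr fun w => ?_
  rw [Kernel.prodMkLeft_apply, samplingKernel_apply]
  rfl

lemma condPlan_mem_Lambda [IsProbabilityMeasure ρ] {μ : Measure X} {ν : Measure Y}
    (hμ : ρ.map (fun p => p.1.1) = μ) (hν : ρ.map Prod.snd = ν) : condPlan ρ ∈ Lambda μ ν := by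
  refine ⟨Measure.isProbabilityMeasure_map measurable_fst_condKernel.aemeasurable,
    ae_isProbabilityMeasure_condPlan, ?_⟩
  rw [intensityHat_condPlan]
  exact ⟨by rwa [Measure.map_map measurable_fst (by fun_prop)],
    by rwa [Measure.map_map measurable_snd (by fun_prop)]⟩

lemma ae_bary_condKernel_eq {X E : Type*} [TopologicalSpace X] [SecondCountableTopology X]
    [MeasurableSpace X] [BorelSpace X] [NormedAddCommGroup E] [NormedSpace ℝ E] [CompleteSpace E]
    [SecondCountableTopology E] [MeasurableSpace E] [BorelSpace E] {ρ : Measure ((X × E) × E)}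
    [IsFiniteMeasure ρ] (hint : Integrable (fun p => p.2 - p.1.2) ρ)
    (hzero : ∀ S : Set (X × E), IsClosed S → ∫ p in Prod.fst ⁻¹' S, (p.2 - p.1.2) ∂ρ = 0) :
    ∀ᵐ w ∂ρ.fst, bary (ρ.condKernel w) = w.2 := by
  have hcond := ρ.disintegrate ρ.condKernel
  have hint' : Integrable (fun p => p.2 - p.1.2) (ρ.fst ⊗ₘ ρ.condKernel) := by rwa [hcond]
  have hmean : ∀ᵐ w ∂ρ.fst, ∫ z, (z - w.2) ∂ρ.condKernel w = 0 := by
    refine ae_eq_zero_of_forall_setIntegral_isClosed_eq_zero hint'.integral_compProd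
      fun S hS => ?_
    have hset := Measure.setIntegral_compProd hS.measurableSet .univ hint'.integrableOn
    simp only [Measure.restrict_univ, hcond, prod_univ] at hset
    exact hset.symm.trans (hzero S hS)
  filter_upwards [hmean, hint'.ae_of_compProd] with w hw hsub
  have hid : Integrable (fun z => z) (ρ.condKernel w) :=
    (hsub.add (integrable_const w.2)).congr (.of_forall fun z => sub_add_cancel z w.2)
  rwa [integral_sub hid (integrable_const _), integral_const, probReal_univ, one_smul,
    sub_eq_zero] at hw

end Disintegration

section BarycentricCosts

/-- The cost depends on its second argument only through the barycenter. -/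
def IsBarycentric {X E : Type*} [NormedAddCommGroup E] [NormedSpace ℝ E] [MeasurableSpace E]
    (r : ℝ) (C : X × Measure E → EReal) : Prop :=
  ∀ x, ∀ p ∈ Pr r (0 : E), ∀ q ∈ Pr r (0 : E), bary p = bary q → C (x, p) = C (x, q)

/-- The restriction `(x, y) ↦ C (x, δ_y)` of a cost to Dirac measures. -/
def diracCost {X Y : Type*} [MeasurableSpace Y] (C : X × Measure Y → EReal) (w : X × Y) : EReal :=
  C (w.1, Measure.dirac w.2)

section Dirac

variable {Y : Type*} [MeasurableSpace Y] [PseudoMetricSpace Y] {r : ℝ}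

lemma dirac_mem_Pr [MeasurableSingletonClass Y] (r : ℝ) (y₀ y : Y) : Measure.dirac y ∈ Pr r y₀ := by
  refine ⟨inferInstance, ?_⟩
  rw [FinMom, lintegral_dirac]
  exact ENNReal.ofReal_lt_top

lemma Wr_dirac_le [MeasurableSingletonClass (Y × Y)] (hr : 0 < r) (y z : Y) :
    Wr r (Measure.dirac y) (Measure.dirac z) ≤ ENNReal.ofReal (dist y z) := by
  refine (iInf₂_le (Measure.dirac (y, z))
    ⟨Measure.map_dirac' measurable_fst _, Measure.map_dirac' measurable_snd _⟩).trans ?_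
  rw [lintegral_dirac, ← ENNReal.ofReal_rpow_of_nonneg dist_nonneg hr.le, ← ENNReal.rpow_mul,
    mul_one_div_cancel hr.ne', ENNReal.rpow_one]

lemma WrTendsto.dirac [MeasurableSingletonClass (Y × Y)] (hr : 0 < r) {u : ℕ → Y} {y : Y}
    (hu : Tendsto u atTop (𝓝 y)) :
    WrTendsto r (fun n => Measure.dirac (u n)) (Measure.dirac y) := by
  have hdist := ENNReal.tendsto_ofReal (tendsto_iff_dist_tendsto_zero.1 hu)
  rw [ENNReal.ofReal_zero] at hdist
  exact tendsto_of_tendsto_of_tendsto_of_le_of_le tendsto_const_nhds hdist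
    (fun _ => zero_le) fun _ => Wr_dirac_le hr _ _

lemma LscWr.lowerSemicontinuous_diracCost [MeasurableSingletonClass Y]
    [MeasurableSingletonClass (Y × Y)] {X : Type*} [TopologicalSpace X] [FirstCountableTopology X]
    {C : X × Measure Y → EReal} {y₀ : Y} (hr : 0 < r) (hC : LscWr r y₀ C) :
    LowerSemicontinuous (diracCost C) := by
  intro w t ht
  by_contra hcon
  obtain ⟨ws, hws, hle⟩ := exists_seq_forall_of_frequently (not_eventually.1 hcon)
  have hliminf := hC w.1 (fun n => (ws n).1) _ (fun n => Measure.dirac (ws n).2)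
    (dirac_mem_Pr r y₀ w.2) (fun n => dirac_mem_Pr r y₀ _) ((continuous_fst.tendsto w).comp hws)
    (WrTendsto.dirac hr ((continuous_snd.tendsto w).comp hws))
  have hle' : liminf (fun n => C ((ws n).1, Measure.dirac (ws n).2)) atTop ≤ t :=
    liminf_le_of_frequently_le' (.of_forall fun n => not_lt.1 (hle n))
  exact ((hliminf.trans hle').trans_lt ht).false

end Dirac

section CostBound

variable {X E : Type*} [PseudoMetricSpace X] [NormedAddCommGroup E] {r K : ℝ} {x₀ : X}

/-- The function `K (1 + d(x, x₀) ^ r + ⟨y⟩ ^ r)`, whose negative minorises `diracCost C`. -/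
def costBound (r K : ℝ) (x₀ : X) (w : X × E) : ℝ := K * (1 + dist w.1 x₀ ^ r + weight r w.2)

lemma continuous_costBound (hr : 0 ≤ r) : Continuous (costBound r K x₀ : X × E → ℝ) := by
  have hdist : Continuous fun w : X × E => dist w.1 x₀ ^ r :=
    (PhiR.dist_rpow_mem hr x₀).1.comp continuous_fst
  have hweight : Continuous fun w : X × E => weight r w.2 :=
    (continuous_weight r).comp continuous_snd
  exact continuous_const.mul ((continuous_const.add hdist).add hweight)

lemma integrable_costBound_and_integral_costBound [MeasurableSpace X] [OpensMeasurableSpace X]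
    [MeasurableSpace E] {μ : Measure X} [IsProbabilityMeasure μ] {ρ : Measure ((X × E) × E)}
    [IsProbabilityMeasure ρ] (hr : 0 ≤ r) (hμ : FinMom r x₀ μ)
    (hρ : ρ.map (fun p => p.1.1) = μ) (hweight : Integrable (fun p => weight r p.1.2) ρ) :
    Integrable (fun p => costBound r K x₀ p.1) ρ ∧ ∫ p, costBound r K x₀ p.1 ∂ρ =
      K * (1 + ∫ x, dist x x₀ ^ r ∂μ) + K * ∫ p, weight r p.1.2 ∂ρ := by
  have hmem := PhiR.dist_rpow_mem hr x₀
  have hm : Measurable fun p : (X × E) × E => p.1.1 := by fun_prop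
  have hdist : Integrable (fun p : (X × E) × E => dist p.1.1 x₀ ^ r) ρ :=
    (hρ ▸ PhiR.integrable hr hμ hmem).comp_measurable hm
  have hsum : Integrable (fun p : (X × E) × E => 1 + dist p.1.1 x₀ ^ r) ρ :=
    (integrable_const 1).add hdist
  refine ⟨(hsum.add hweight).const_mul K, ?_⟩
  simp only [costBound]
  rw [integral_const_mul, integral_add hsum hweight, integral_add (integrable_const _) hdist,
    integral_const, probReal_univ, one_smul, mul_add, ← hρ,
    integral_map hm.aemeasurable hmem.1.aestronglyMeasurable]

variable [MeasurableSpace E] {C : X × Measure E → EReal}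

/-- The nonnegative cost `C (x, δ_y) + costBound r K x₀ (x, y)`. -/
def shiftedCost (r K : ℝ) (x₀ : X) (C : X × Measure E → EReal) (w : X × E) : ℝ≥0∞ :=
  (diracCost C w + costBound r K x₀ w).toENNReal

lemma lowerSemicontinuous_shiftedCost (hr : 0 ≤ r) (hC : LowerSemicontinuous (diracCost C)) :
    LowerSemicontinuous (shiftedCost r K x₀ C) := by
  have hbound : Continuous fun w : X × E => (costBound r K x₀ w : EReal) :=
    continuous_coe_real_ereal.comp (continuous_costBound hr)
  exact EReal.continuous_toENNReal.comp_lowerSemicontinuous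
    (hC.add' hbound.lowerSemicontinuous fun w =>
      EReal.continuousAt_add (.inr (EReal.coe_ne_bot _)) (.inr (EReal.coe_ne_top _)))
    fun _ _ => EReal.toENNReal_le_toENNReal

lemma coe_sub_costBound_le_diracCost {w : X × E} {t : ℝ}
    (hlb : ((-costBound r K x₀ w : ℝ) : EReal) ≤ diracCost C w)
    (ht : ENNReal.ofReal t ≤ shiftedCost r K x₀ C w) :
    ((t - costBound r K x₀ w : ℝ) : EReal) ≤ diracCost C w := by
  unfold shiftedCost at ht
  generalize diracCost C w = e at hlb ht ⊢
  induction e with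
  | bot => simp at hlb
  | top => simp
  | coe c =>
    have hc : -costBound r K x₀ w ≤ c := EReal.coe_le_coe_iff.1 hlb
    rw [← EReal.coe_add, EReal.real_coe_toENNReal, ENNReal.ofReal_le_ofReal_iff (by linarith)] at ht
    exact EReal.coe_le_coe_iff.2 (by linarith)

end CostBound

variable {X E : Type*} [NormedAddCommGroup E] [InnerProductSpace ℝ E] [FiniteDimensional ℝ E]
  [MeasurableSpace E] [BorelSpace E] {r K a : ℝ} {C : X × Measure E → EReal}

lemma bary_dirac (y : E) : bary (Measure.dirac y) = y := integral_dirac _ y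

lemma measurable_bary : Measurable (bary : Measure E → E) :=
  (StronglyMeasurable.integral_kernel (κ := ⟨id, measurable_id⟩) stronglyMeasurable_id).measurable

lemma integrable_id_of_mem_Pr (hr : 1 ≤ r) {p : Measure E} (hp : p ∈ Pr r (0 : E)) :
    Integrable (fun y => y) p := by
  have := hp.1
  exact (integrable_norm_iff aestronglyMeasurable_id).1
    (PhiR.integrable (by linarith) hp.2 (PhiR.norm_mem hr))

lemma IsBarycentric.eq_diracCost (hC : IsBarycentric r C) (x : X) {p : Measure E}
    (hp : p ∈ Pr r (0 : E)) : C (x, p) = diracCost C (x, bary p) :=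
  hC x p hp _ (dirac_mem_Pr r _ _) (bary_dirac _).symm

variable [PseudoMetricSpace X] {x₀ : X}

lemma neg_costBound_le_diracCost (hr : 1 ≤ r)
    (hlb : ∀ x, ∀ p ∈ Pr r (0 : E),
      ((-(K * (1 + dist x x₀ ^ r + (Wr r p (Measure.dirac (0 : E)) ^ r).toReal)) : ℝ) : EReal)
        ≤ C (x, p)) (w : X × E) :
    ((-costBound r |K| x₀ w : ℝ) : EReal) ≤ diracCost C w := by
  refine le_trans ?_ (hlb w.1 _ (dirac_mem_Pr r _ w.2))
  have hWr : (Wr r (Measure.dirac w.2) (Measure.dirac 0) ^ r).toReal ≤ weight r w.2 := by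
    refine le_trans ?_ (norm_rpow_le_weight (by linarith) w.2)
    refine ENNReal.toReal_le_of_le_ofReal (by positivity) ?_
    rw [← ENNReal.ofReal_rpow_of_nonneg (norm_nonneg _) (by linarith), ← dist_zero_right]
    exact ENNReal.rpow_le_rpow (Wr_dirac_le (by linarith) _ _) (by linarith)
  have hmul : K * (1 + dist w.1 x₀ ^ r + (Wr r (Measure.dirac w.2) (Measure.dirac 0) ^ r).toReal)
      ≤ costBound r |K| x₀ w :=
    mul_le_mul (le_abs_self K) (by linarith) (by positivity) (abs_nonneg K)
  exact EReal.coe_le_coe_iff.2 (neg_le_neg hmul)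

variable [MeasurableSpace X] [OpensMeasurableSpace X] {μ : Measure X} [IsProbabilityMeasure μ]

lemma IsLagrangianLE.eInt_diracCost_le {ν : Measure E} [IsProbabilityMeasure ν]
    {ρ : Measure ((X × E) × E)} [IsProbabilityMeasure ρ] (hr : 1 ≤ r) (hK : 0 ≤ K)
    (hμ : FinMom r x₀ μ) (hν : FinMom r (0 : E) ν) (hC : LowerSemicontinuous (diracCost C))
    (hlb : ∀ w, ((-costBound r K x₀ w : ℝ) : EReal) ≤ diracCost C w)
    (hρ : ρ.map (fun p => p.1.1) = μ)
    (H : IsLagrangianLE r K (shiftedCost r K x₀ C) ν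
      (a + K * (1 + ∫ x, dist x x₀ ^ r ∂μ) + (K + 2) * ∫ y, weight r y ∂ν) ρ) :
    eInt (fun p => diracCost C p.1) ρ ≤ a := by
  have hr0 : 0 ≤ r := by linarith
  obtain ⟨hint, hintegral⟩ := integrable_costBound_and_integral_costBound (K := K) hr0 hμ hρ
    (H.integrable_weight_fst hr hK)
  have hnonneg := H.integral_boundedContinuousFunction_le hr hK hν (f := 0) fun w => by simp
  have hle := H.lintegral_cost_le hr hK hν (lowerSemicontinuous_shiftedCost hr0 hC)
  refine eInt_le_of_lintegral_add_le (hC.measurable.comp measurable_fst).aemeasurable hint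
    (.of_forall fun p => hlb p.1) ?_ (hle.trans (ENNReal.ofReal_le_ofReal ?_))
  · simp only [BoundedContinuousFunction.coe_zero, Pi.zero_apply, NNReal.coe_zero,
      integral_zero] at hnonneg
    linarith
  · linarith

end BarycentricCosts

section WeakDuality

lemma lowerSemicontinuous_biInf_of_isCompact {X Y α : Type*} [TopologicalSpace X]
    [TopologicalSpace Y] [CompleteLinearOrder α] [DenselyOrdered α] {G : X × Y → α}
    (hG : LowerSemicontinuous G) {S : Set Y} (hS : IsCompact S) :
    LowerSemicontinuous fun x => ⨅ y ∈ S, G (x, y) := by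
  intro x t ht
  obtain ⟨t', htt', ht'⟩ := exists_between ht
  have hev := hS.eventually_forall_of_forall_eventually (x₀ := x) (P := fun x y => t' < G (x, y))
    fun y hy => hG (x, y) t' (ht'.trans_le (iInf₂_le y hy))
  filter_upwards [hev] with x' hx'
  exact htt'.trans_le (le_iInf₂ fun y hy => (hx' y hy).le)

variable {X E : Type*} [NormedAddCommGroup E] [InnerProductSpace ℝ E] [FiniteDimensional ℝ E]
  [MeasurableSpace E] [BorelSpace E] {r : ℝ} {C : X × Measure E → EReal} {ψ : E → ℝ}

lemma IsBarycentric.RC_eq_iInf (hr : 1 ≤ r) (hC : IsBarycentric r C)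
    (hψ : ψ ∈ PhiR r (0 : E)) (hψcv : ConcaveOn ℝ univ ψ) (x : X) :
    RC r (0 : E) C ψ x = ⨅ y, (((-ψ y : ℝ) : EReal) + diracCost C (x, y)) := by
  refine le_antisymm (le_iInf fun y => (iInf₂_le _ (dirac_mem_Pr r 0 y)).trans ?_)
    (le_iInf₂ fun p hp => (iInf_le _ (bary p)).trans ?_)
  · rw [integral_dirac]
    rfl
  · have := hp.1
    have hjensen : ∫ y, ψ y ∂p ≤ ψ (bary p) :=
      hψcv.le_map_integral hψ.1.continuousOn isClosed_univ (.of_forall fun _ => mem_univ _)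
        (integrable_id_of_mem_Pr hr hp) (PhiR.integrable (by linarith) hp.2 hψ)
    rw [hC.eq_diracCost x hp]
    exact add_le_add_left (EReal.coe_le_coe_iff.2 (neg_le_neg hjensen)) _

lemma IsBarycentric.measurable_RC [TopologicalSpace X] [MeasurableSpace X]
    [OpensMeasurableSpace X] (hr : 1 ≤ r) (hC : IsBarycentric r C)
    (hlsc : LowerSemicontinuous (diracCost C)) (hψ : ψ ∈ PhiR r (0 : E))
    (hψcv : ConcaveOn ℝ univ ψ) : Measurable (RC r (0 : E) C ψ) := by
  have hψlsc : LowerSemicontinuous fun w : X × E => ((-ψ w.2 : ℝ) : EReal) :=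
    (continuous_coe_real_ereal.comp (hψ.1.comp continuous_snd).neg).lowerSemicontinuous
  have hsum := hψlsc.add' hlsc fun w => EReal.continuousAt_add
    (.inl (EReal.coe_ne_top _)) (.inl (EReal.coe_ne_bot _))
  have hexhaust : RC r (0 : E) C ψ = fun x => ⨅ n : ℕ, ⨅ y ∈ Metric.closedBall (0 : E) n,
      (((-ψ y : ℝ) : EReal) + diracCost C (x, y)) := by
    ext x
    rw [hC.RC_eq_iInf hr hψ hψcv]
    refine le_antisymm (le_iInf fun n => le_iInf₂ fun y _ => iInf_le _ y) (le_iInf fun y => ?_)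
    obtain ⟨n, hn⟩ := exists_nat_ge ‖y‖
    exact (iInf_le _ n).trans (iInf₂_le y (mem_closedBall_zero_iff.2 hn))
  rw [hexhaust]
  exact .iInf fun n =>
    (lowerSemicontinuous_biInf_of_isCompact hsum (isCompact_closedBall _ n)).measurable

lemma integral_le_of_forall_add_inner_le (hr : 1 ≤ r) {p : Measure E} (hp : p ∈ Pr r (0 : E))
    (hψ : ψ ∈ PhiR r (0 : E)) {v : E} {t : ℝ} (h : ∀ z, ψ z + ⟪v, z - bary p⟫ ≤ t) :
    ∫ z, ψ z ∂p ≤ t := by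
  have := hp.1
  have hid := integrable_id_of_mem_Pr hr hp
  have hsub : Integrable (fun z => z - bary p) p := hid.sub (integrable_const _)
  have hψint : Integrable ψ p := PhiR.integrable (by linarith) hp.2 hψ
  have hmean : ∫ z, ⟪v, z - bary p⟫ ∂p = 0 := by
    rw [integral_inner hsub, integral_sub hid (integrable_const _), integral_const,
      probReal_univ, one_smul, bary, sub_self, inner_zero_right]
  calc ∫ z, ψ z ∂p = ∫ z, (ψ z + ⟪v, z - bary p⟫) ∂p := by
        rw [integral_add hψint (hsub.const_inner v), hmean, add_zero]
    _ ≤ ∫ _, t ∂p := integral_mono (hψint.add (hsub.const_inner v)) (integrable_const t) h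
    _ = t := by rw [integral_const, probReal_univ, one_smul]

lemma IsBarycentric.coe_add_integral_le (hr : 1 ≤ r) (hC : IsBarycentric r C)
    (hψ : ψ ∈ PhiR r (0 : E)) {φ : X → ℝ} {Δ : E → E}
    (h : ∀ x y z, ((φ x + ψ z + ⟪Δ y, z - y⟫ : ℝ) : EReal) ≤ diracCost C (x, y))
    (x : X) {p : Measure E} (hp : p ∈ Pr r (0 : E)) :
    ((φ x + ∫ z, ψ z ∂p : ℝ) : EReal) ≤ C (x, p) := by
  rw [hC.eq_diracCost x hp]
  have hx := h x (bary p)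
  generalize diracCost C (x, bary p) = e at hx ⊢
  induction e with
  | bot => exact absurd (hx 0) (by simp)
  | top => exact le_top
  | coe t =>
    have hle : ∫ z, ψ z ∂p ≤ t - φ x := integral_le_of_forall_add_inner_le hr hp hψ fun z => by
      linarith [EReal.coe_le_coe_iff.1 (hx z)]
    exact EReal.coe_le_coe_iff.2 (by linarith)

variable [PseudoMetricSpace X] [MeasurableSpace X] [OpensMeasurableSpace X] {x₀ : X}
  {μ : Measure X} {ν : Measure E} [IsProbabilityMeasure ν] {P : Measure (X × Measure E)}

lemma IsBarycentric.integral_add_eInt_RC_le (hr : 1 ≤ r) (hν : FinMom r (0 : E) ν)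
    (hC : IsBarycentric r C) (hlsc : LowerSemicontinuous (diracCost C)) (hP : P ∈ Lambda μ ν)
    (hψ : ψ ∈ PhiR r (0 : E)) (hψcv : ConcaveOn ℝ univ ψ) :
    ((∫ y, ψ y ∂ν : ℝ) : EReal) + eInt (RC r (0 : E) C ψ) μ ≤ eInt C P := by
  obtain ⟨hint, hintegral⟩ := Lambda.integrable_integral_and_integral_integral hP
    (PhiR.integrable (by linarith) hν hψ)
  have hRC := hC.measurable_RC hr hlsc hψ hψcv
  have hle : ∀ᵐ xp ∂P, RC r (0 : E) C ψ xp.1 + (∫ y, ψ y ∂xp.2 : ℝ) ≤ C xp := by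
    filter_upwards [Lambda.ae_mem_Pr hν hP] with xp hxp
    have hinf : RC r (0 : E) C ψ xp.1 ≤ ((-∫ y, ψ y ∂xp.2 : ℝ) : EReal) + C xp :=
      iInf₂_le xp.2 hxp
    refine (add_le_add_left hinf _).trans_eq ?_
    rw [add_right_comm, ← EReal.coe_add, neg_add_cancel, EReal.coe_zero, zero_add]
  calc ((∫ y, ψ y ∂ν : ℝ) : EReal) + eInt (RC r (0 : E) C ψ) μ
      = eInt (fun xp => RC r (0 : E) C ψ xp.1) P
          + ((∫ xp, ∫ y, ψ y ∂xp.2 ∂P : ℝ) : EReal) := by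
        rw [← Lambda.map_fst hP, eInt_map measurable_fst hRC, hintegral, add_comm]
    _ = eInt (fun xp => RC r (0 : E) C ψ xp.1 + (∫ y, ψ y ∂xp.2 : ℝ)) P :=
        (eInt_add_coe (hRC.comp measurable_fst).aemeasurable hint).symm
    _ ≤ eInt C P := eInt_mono_ae hle

lemma IsBarycentric.integral_add_integral_le_eInt [IsFiniteMeasure μ] (hr : 1 ≤ r)
    (hμ : FinMom r x₀ μ) (hν : FinMom r (0 : E) ν) (hC : IsBarycentric r C)
    (hP : P ∈ Lambda μ ν) {φ : X → ℝ} (hφ : φ ∈ PhiR r x₀) (hψ : ψ ∈ PhiR r (0 : E)) {Δ : E → E}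
    (h : ∀ x y z, ((φ x + ψ z + ⟪Δ y, z - y⟫ : ℝ) : EReal) ≤ diracCost C (x, y)) :
    ((∫ x, φ x ∂μ + ∫ y, ψ y ∂ν : ℝ) : EReal) ≤ eInt C P := by
  have hr0 : 0 ≤ r := by linarith
  obtain ⟨hψP, hψeq⟩ := Lambda.integrable_integral_and_integral_integral hP
    (PhiR.integrable hr0 hν hψ)
  have hφP : Integrable (fun xp => φ xp.1) P :=
    ((Lambda.map_fst hP).symm ▸ PhiR.integrable hr0 hμ hφ).comp_measurable measurable_fst
  have hφeq : ∫ xp, φ xp.1 ∂P = ∫ x, φ x ∂μ := by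
    rw [← Lambda.map_fst hP, integral_map measurable_fst.aemeasurable hφ.1.aestronglyMeasurable]
  rw [← hφeq, ← hψeq, ← integral_add hφP hψP]
  refine le_eInt (hφP.add hψP) ?_
  filter_upwards [Lambda.ae_mem_Pr hν hP] with xp hxp
  exact hC.coe_add_integral_le hr hψ h xp.1 hxp

lemma IsBarycentric.integral_le_eInt_RC [IsFiniteMeasure μ] (hr : 1 ≤ r) (hμ : FinMom r x₀ μ)
    (hC : IsBarycentric r C) {φ : X → ℝ} (hφ : φ ∈ PhiR r x₀) (hψ : ψ ∈ PhiR r (0 : E))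
    (hψcv : ConcaveOn ℝ univ ψ)
    (h : ∀ x y, ((φ x + ψ y : ℝ) : EReal) ≤ diracCost C (x, y)) :
    ((∫ x, φ x ∂μ : ℝ) : EReal) ≤ eInt (RC r (0 : E) C ψ) μ := by
  refine le_eInt (PhiR.integrable (by linarith) hμ hφ) (.of_forall fun x => ?_)
  rw [hC.RC_eq_iInf hr hψ hψcv]
  refine le_iInf fun y => le_trans ?_ (add_le_add_right (h x y) _)
  rw [← EReal.coe_add]
  exact EReal.coe_le_coe_iff.2 (by linarith)

end WeakDuality

section Duality

variable {X E : Type*} [NormedAddCommGroup E] [InnerProductSpace ℝ E] [FiniteDimensional ℝ E]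
  [MeasurableSpace E] [BorelSpace E] {r K a : ℝ} {C : X × Measure E → EReal}

lemma IsBarycentric.eInt_condPlan [TopologicalSpace X] [MeasurableSpace X] [BorelSpace X]
    {μ : Measure X} {ν : Measure E} {ρ : Measure ((X × E) × E)}
    [IsProbabilityMeasure ρ] (hC : IsBarycentric r C) (hlsc : LowerSemicontinuous (diracCost C))
    (hν : FinMom r (0 : E) ν) (hP : condPlan ρ ∈ Lambda μ ν)
    (hbary : ∀ᵐ w ∂ρ.fst, bary (ρ.condKernel w) = w.2) :
    eInt C (condPlan ρ) = eInt (fun p => diracCost C p.1) ρ := by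
  have hmeas : Measurable fun xp : X × Measure E => diracCost C (xp.1, bary xp.2) :=
    hlsc.measurable.comp (measurable_fst.prodMk (measurable_bary.comp measurable_snd))
  calc eInt C (condPlan ρ)
      = eInt (fun xp => diracCost C (xp.1, bary xp.2)) (condPlan ρ) := by
        refine eInt_congr_ae ?_
        filter_upwards [Lambda.ae_mem_Pr hν hP] with xp hxp using hC.eq_diracCost xp.1 hxp
    _ = eInt (fun w => diracCost C (w.1, bary (ρ.condKernel w))) ρ.fst :=
        eInt_map measurable_fst_condKernel hmeas
    _ = eInt (diracCost C) ρ.fst := by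
        refine eInt_congr_ae ?_
        filter_upwards [hbary] with w hw
        rw [hw]
    _ = eInt (fun p => diracCost C p.1) ρ := eInt_map measurable_fst hlsc.measurable

variable [MetricSpace X] [SecondCountableTopology X] [MeasurableSpace X] [BorelSpace X] {x₀ : X}
  {μ : Measure X} {ν : Measure E} [IsProbabilityMeasure μ] [IsProbabilityMeasure ν]

lemma IsLagrangianLE.exists_mem_Lambda_eInt_le {ρ : Measure ((X × E) × E)}
    [IsProbabilityMeasure ρ] (hr : 1 ≤ r) (hK : 0 ≤ K) (hμ : FinMom r x₀ μ)
    (hν : FinMom r (0 : E) ν) (hC : IsBarycentric r C)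
    (hlsc : LowerSemicontinuous (diracCost C))
    (hlb : ∀ w, ((-costBound r K x₀ w : ℝ) : EReal) ≤ diracCost C w)
    (hρ : ρ.map (fun p => p.1.1) = μ)
    (H : IsLagrangianLE r K (shiftedCost r K x₀ C) ν
      (a + K * (1 + ∫ x, dist x x₀ ^ r ∂μ) + (K + 2) * ∫ y, weight r y ∂ν) ρ) :
    ∃ P ∈ Lambda μ ν, eInt C P ≤ a := by
  have hP := condPlan_mem_Lambda hρ (H.map_snd_eq hr hK)
  have hbary := ae_bary_condKernel_eq (H.integrable_sub hr hK)
    fun S hS => H.setIntegral_sub_eq_zero hr hK hν hS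
  exact ⟨condPlan ρ, hP, (hC.eInt_condPlan hlsc hν hP hbary).trans_le
    (H.eInt_diracCost_le hr hK hμ hν hlsc hlb hρ)⟩

lemma IsBarycentric.exists_plan_or_exists_potentials [CompleteSpace X] (hr : 1 ≤ r) (hK : 0 ≤ K)
    (hμ : FinMom r x₀ μ) (hν : FinMom r (0 : E) ν) (hC : IsBarycentric r C)
    (hlsc : LowerSemicontinuous (diracCost C))
    (hlb : ∀ w, ((-costBound r K x₀ w : ℝ) : EReal) ≤ diracCost C w) (a : ℝ) :
    (∃ P ∈ Lambda μ ν, eInt C P ≤ a) ∨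
      ∃ φ ∈ PhiR r x₀, ∃ ψ ∈ PhiR r (0 : E), ConcaveOn ℝ univ ψ ∧
        (∀ x y, ((φ x + ψ y : ℝ) : EReal) ≤ diracCost C (x, y)) ∧
        a ≤ ∫ x, φ x ∂μ + ∫ y, ψ y ∂ν := by
  obtain ⟨π, hπ, H⟩ | ⟨u, hu, hle⟩ :=
    exists_isLagrangianLE_or_exists_multiplier hr hK (shiftedCost r K x₀ C) μ hν
      (a + K * (1 + ∫ x, dist x x₀ ^ r ∂μ) + (K + 2) * ∫ y, weight r y ∂ν)
  · exact .inl (H.exists_mem_Lambda_eInt_le hr hK hμ hν hC hlsc hlb hπ)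
  · obtain ⟨φ, hφ, ψ, hψ, hψcv, hφψ, ha⟩ :=
      exists_potentials_of_le_integral_reducedLagrangian hr hK hμ hν hu hle
    have hcost := fun w => coe_sub_costBound_le_diracCost (hlb w) (hu.le w)
    exact .inr ⟨φ, hφ, ψ, hψ, hψcv,
      fun x y => (EReal.coe_le_coe_iff.2 (hφψ x y)).trans (hcost (x, y)), ha⟩

end Duality

section Values

variable {X E : Type*} [NormedAddCommGroup E] [InnerProductSpace ℝ E] [MeasurableSpace E]

/-- The value `inf_{P ∈ Λ(μ,ν)} ∫ C dP` of the weak transport problem. -/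
def primalValue [MeasurableSpace X] (C : X × Measure E → EReal) (μ : Measure X) (ν : Measure E) :
    EReal :=
  sInf {v | ∃ P ∈ Lambda μ ν, v = eInt C P}

/-- The dual value `sup ν(ψ) + μ(R_C ψ)` over concave `ψ ∈ Φ_r`. -/
def dualValueRC [MeasurableSpace X] (r : ℝ) (C : X × Measure E → EReal) (μ : Measure X)
    (ν : Measure E) : EReal :=
  sSup {v | ∃ ψ ∈ PhiR r (0 : E), ConcaveOn ℝ univ ψ ∧
    v = ((∫ y, ψ y ∂ν : ℝ) : EReal) + eInt (RC r (0 : E) C ψ) μ}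

variable [PseudoMetricSpace X] [MeasurableSpace X]

/-- The dual value `sup μ(φ) + ν(ψ)` over `φ(x) + ψ(y) ≤ C(x,δ_y)` with `ψ` concave. -/
def dualValueConcave (r : ℝ) (x₀ : X) (C : X × Measure E → EReal) (μ : Measure X)
    (ν : Measure E) : EReal :=
  sSup {v | ∃ φ ∈ PhiR r x₀, ∃ ψ ∈ PhiR r (0 : E), ConcaveOn ℝ univ ψ ∧
    (∀ x y, ((φ x + ψ y : ℝ) : EReal) ≤ C (x, Measure.dirac y)) ∧
    v = ((∫ x, φ x ∂μ + ∫ y, ψ y ∂ν : ℝ) : EReal)}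

/-- The dual value `sup μ(φ) + ν(ψ)` over `φ(x) + ψ(z) + Δ(y)·(z - y) ≤ C(x,δ_y)`, in which `ψ` is
not required to be concave. -/
def dualValueMartingale (r : ℝ) (x₀ : X) (C : X × Measure E → EReal) (μ : Measure X)
    (ν : Measure E) : EReal :=
  sSup {v | ∃ φ ∈ PhiR r x₀, ∃ ψ ∈ PhiR r (0 : E), ∃ Δ : E → E,
    (∀ x y z, ((φ x + ψ z + ⟪Δ y, z - y⟫ : ℝ) : EReal) ≤ C (x, Measure.dirac y)) ∧
    v = ((∫ x, φ x ∂μ + ∫ y, ψ y ∂ν : ℝ) : EReal)}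

variable [FiniteDimensional ℝ E] {r : ℝ} {C : X × Measure E → EReal} {x₀ : X}
  {μ : Measure X} {ν : Measure E}

lemma dualValueConcave_le_dualValueMartingale :
    dualValueConcave r x₀ C μ ν ≤ dualValueMartingale r x₀ C μ ν := by
  refine sSup_le ?_
  rintro _ ⟨φ, hφ, ψ, hψ, hψcv, h, rfl⟩
  choose g hg using exists_supergradient hψ.1 hψcv
  refine le_sSup ⟨φ, hφ, ψ, hψ, fun y => -g y, fun x y z => ?_, rfl⟩
  refine (EReal.coe_le_coe_iff.2 ?_).trans (h x y)
  rw [inner_neg_left]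
  linarith [hg y z]

variable [BorelSpace E]

lemma IsBarycentric.dualValueConcave_le_dualValueRC [OpensMeasurableSpace X]
    [IsFiniteMeasure μ] (hr : 1 ≤ r) (hμ : FinMom r x₀ μ) (hC : IsBarycentric r C) :
    dualValueConcave r x₀ C μ ν ≤ dualValueRC r C μ ν := by
  refine sSup_le ?_
  rintro _ ⟨φ, hφ, ψ, hψ, hψcv, h, rfl⟩
  refine le_trans ?_ (le_sSup ⟨ψ, hψ, hψcv, rfl⟩)
  rw [EReal.coe_add, add_comm]
  exact add_le_add_right (hC.integral_le_eInt_RC hr hμ hφ hψ hψcv h) _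

variable [IsProbabilityMeasure ν]

lemma IsBarycentric.dualValueRC_le_primalValue [OpensMeasurableSpace X] (hr : 1 ≤ r)
    (hν : FinMom r (0 : E) ν) (hC : IsBarycentric r C)
    (hlsc : LowerSemicontinuous (diracCost C)) : dualValueRC r C μ ν ≤ primalValue C μ ν := by
  refine sSup_le ?_
  rintro _ ⟨ψ, hψ, hψcv, rfl⟩
  refine le_sInf ?_
  rintro _ ⟨P, hP, rfl⟩
  exact hC.integral_add_eInt_RC_le hr hν hlsc hP hψ hψcv

lemma IsBarycentric.dualValueMartingale_le_primalValue [OpensMeasurableSpace X]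
    [IsFiniteMeasure μ] (hr : 1 ≤ r) (hμ : FinMom r x₀ μ) (hν : FinMom r (0 : E) ν)
    (hC : IsBarycentric r C) : dualValueMartingale r x₀ C μ ν ≤ primalValue C μ ν := by
  refine sSup_le ?_
  rintro _ ⟨φ, hφ, ψ, hψ, Δ, h, rfl⟩
  refine le_sInf ?_
  rintro _ ⟨P, hP, rfl⟩
  exact hC.integral_add_integral_le_eInt hr hμ hν hP hφ hψ h

end Values

lemma IsBarycentric.primalValue_le_dualValueConcave {X E : Type*} [MetricSpace X]
    [CompleteSpace X] [SecondCountableTopology X] [MeasurableSpace X] [BorelSpace X]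
    [NormedAddCommGroup E] [InnerProductSpace ℝ E] [FiniteDimensional ℝ E] [MeasurableSpace E]
    [BorelSpace E] {r K : ℝ} {C : X × Measure E → EReal} {x₀ : X} {μ : Measure X} {ν : Measure E}
    [IsProbabilityMeasure μ] [IsProbabilityMeasure ν] (hr : 1 ≤ r) (hK : 0 ≤ K)
    (hμ : FinMom r x₀ μ) (hν : FinMom r (0 : E) ν) (hC : IsBarycentric r C)
    (hlsc : LowerSemicontinuous (diracCost C))
    (hlb : ∀ w, ((-costBound r K x₀ w : ℝ) : EReal) ≤ diracCost C w) :
    primalValue C μ ν ≤ dualValueConcave r x₀ C μ ν := by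
  refine EReal.ge_of_forall_gt_iff_ge.1 fun a ha => ?_
  obtain ⟨P, hP, hPa⟩ | ⟨φ, hφ, ψ, hψ, hψcv, hφψ, hval⟩ :=
    hC.exists_plan_or_exists_potentials hr hK hμ hν hlsc hlb a
  · have hle : primalValue C μ ν ≤ eInt C P := sInf_le ⟨P, hP, rfl⟩
    exact absurd ha (hle.trans hPa).not_gt
  · exact (EReal.coe_le_coe_iff.2 hval).trans (le_sSup ⟨φ, hφ, ψ, hψ, hψcv, hφψ, rfl⟩)

end WOT

theorem statement10_general {X E : Type*} [MeasurableSpace X] [MetricSpace X] [CompleteSpace X]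
    [SecondCountableTopology X] [BorelSpace X] [NormedAddCommGroup E] [InnerProductSpace ℝ E]
    [FiniteDimensional ℝ E] [MeasurableSpace E] [BorelSpace E] {r K : ℝ} (hr : 1 ≤ r) {x₀ : X}
    {μ : Measure X} {ν : Measure E} [IsProbabilityMeasure μ] [IsProbabilityMeasure ν]
    (hμ : FinMom r x₀ μ) (hν : FinMom r (0 : E) ν) {C : X × Measure E → EReal}
    (hbary : IsBarycentric r C) (hlsc : LscWr r (0 : E) C)
    (hlb : ∀ x, ∀ p ∈ Pr r (0 : E),
      ((-(K * (1 + dist x x₀ ^ r + (Wr r p (Measure.dirac (0 : E)) ^ r).toReal)) : ℝ) : EReal)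
        ≤ C (x, p)) :
    primalValue C μ ν = dualValueRC r C μ ν ∧
      primalValue C μ ν = dualValueConcave r x₀ C μ ν ∧
      primalValue C μ ν = dualValueMartingale r x₀ C μ ν := by
  have hlscDirac := LscWr.lowerSemicontinuous_diracCost (by linarith) hlsc
  have hle := hbary.primalValue_le_dualValueConcave hr (abs_nonneg K) hμ hν hlscDirac
    (neg_costBound_le_diracCost hr hlb)
  have hRC := hbary.dualValueConcave_le_dualValueRC (ν := ν) hr hμ
  have hRCle := hbary.dualValueRC_le_primalValue (μ := μ) hr hν hlscDirac
  have hmartingale : dualValueConcave r x₀ C μ ν ≤ _ := dualValueConcave_le_dualValueMartingale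
  exact ⟨le_antisymm (hle.trans hRC) hRCle, le_antisymm hle (hRC.trans hRCle),
    le_antisymm (hle.trans hmartingale) (hbary.dualValueMartingale_le_primalValue hr hμ hν)⟩

/-- duality for barycentric costs
(Proposition `prop:convex order barycentric C` (b)). -/
theorem statement10 {X : Type*} [MeasurableSpace X] [MetricSpace X] [CompleteSpace X]
    [SecondCountableTopology X] [BorelSpace X] (d : ℕ) (r : ℝ) (hr : 1 ≤ r) (x₀ : X)
    (μ : Measure X) (ν : Measure (EuclideanSpace ℝ (Fin d)))
    [IsProbabilityMeasure μ] [IsProbabilityMeasure ν]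
    (hμ : FinMom r x₀ μ) (hν : FinMom r (0 : EuclideanSpace ℝ (Fin d)) ν)
    (C : X × Measure (EuclideanSpace ℝ (Fin d)) → EReal) (hbot : ∀ z, C z ≠ ⊥)
    (hbary : ∀ x, ∀ p ∈ Pr r (0 : EuclideanSpace ℝ (Fin d)),
      ∀ q ∈ Pr r (0 : EuclideanSpace ℝ (Fin d)), bary p = bary q → C (x, p) = C (x, q))
    (hlsc : LscWr r (0 : EuclideanSpace ℝ (Fin d)) C) (K : ℝ)
    (hlb : ∀ x, ∀ p ∈ Pr r (0 : EuclideanSpace ℝ (Fin d)),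
      ((-(K * (1 + dist x x₀ ^ r +
        (Wr r p (Measure.dirac (0 : EuclideanSpace ℝ (Fin d))) ^ r).toReal)) : ℝ) : EReal)
        ≤ C (x, p)) :
    (sInf {v : EReal | ∃ P ∈ Lambda μ ν, v = eInt C P}
       = sSup {v : EReal | ∃ ψ ∈ PhiR r (0 : EuclideanSpace ℝ (Fin d)),
           ConcaveOn ℝ Set.univ ψ ∧
           v = ((∫ y, ψ y ∂ν : ℝ) : EReal)
             + eInt (RC r (0 : EuclideanSpace ℝ (Fin d)) C ψ) μ}) ∧
    (sInf {v : EReal | ∃ P ∈ Lambda μ ν, v = eInt C P}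
       = sSup {v : EReal | ∃ φ ∈ PhiR r x₀, ∃ ψ ∈ PhiR r (0 : EuclideanSpace ℝ (Fin d)),
           ConcaveOn ℝ Set.univ ψ ∧
           (∀ x y, ((φ x + ψ y : ℝ) : EReal) ≤ C (x, Measure.dirac y)) ∧
           v = ((∫ x, φ x ∂μ + ∫ y, ψ y ∂ν : ℝ) : EReal)}) ∧
    (sInf {v : EReal | ∃ P ∈ Lambda μ ν, v = eInt C P}
       = sSup {v : EReal | ∃ φ ∈ PhiR r x₀, ∃ ψ ∈ PhiR r (0 : EuclideanSpace ℝ (Fin d)),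
           ∃ Δ : EuclideanSpace ℝ (Fin d) → EuclideanSpace ℝ (Fin d),
           (∀ x y z, ((φ x + ψ z + ⟪Δ y, z - y⟫ : ℝ) : EReal) ≤ C (x, Measure.dirac y)) ∧
           v = ((∫ x, φ x ∂μ + ∫ y, ψ y ∂ν : ℝ) : EReal)}) :=
  statement10_general hr hμ hν hbary hlsc hlb
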